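/- Let k and s be natural numbers with k ≥ 4 and 1 ≤ s ≤ (k+1)²/4. Then for each ε > 0 there exists a constant C = C(s,k,ε) > 0 such that for all real X ≥ 1 one has J_{s,k}(X) ≤ C·X^{s+ε}. -/

import Mathlib

/-- Number of integral solutions of the Vinogradov system
of degree k in 2s variables, all lying in [1, X]. -/
noncomputable def Jcount (s k : ℕ) (X : ℝ) : ℕ :=
  Set.ncard {xy : (Fin s → ℤ) × (Fin s → ℤ) |
    (∀ i, 1 ≤ xy.1 i ∧ (xy.1 i : ℝ) ≤ X) ∧
    (∀ i, 1 ≤ xy.2 i ∧ (xy.2 i : ℝ) ≤ X) ∧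
    ∀ j ∈ Finset.Icc 1 k, ∑ i, ((xy.1 i) ^ j - (xy.2 i) ^ j) = 0}

open Finset BigOperators Polynomial

lemma exists_derivative_eq_factorial_mul (n m : ℕ) (Q : ℤ[X]) (hQ : Q.natDegree < n)
    (hX : X ^ m ∣ Q) :
    ∃ P : ℤ[X], derivative P = C ((n.factorial : ℕ) : ℤ) * Q ∧ P.natDegree ≤ n ∧
      X ^ (m + 1) ∣ P := by
  have hcoeff : ∀ d, (∑ j ∈ Finset.range n,
      C (((n.factorial / (j + 1) : ℕ) : ℤ) * Q.coeff j) * X ^ (j + 1)).coeff (d + 1) =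
      if d < n then ((n.factorial / (d + 1) : ℕ) : ℤ) * Q.coeff d else 0 := by
    intro d
    simp only [finsetSum_coeff, coeff_C_mul_X_pow, add_left_inj]
    simp [Finset.sum_ite_eq]
  refine ⟨∑ j ∈ Finset.range n,
    C (((n.factorial / (j + 1) : ℕ) : ℤ) * Q.coeff j) * X ^ (j + 1), ?_, ?_, ?_⟩
  · ext d
    rw [coeff_derivative, hcoeff, coeff_C_mul]
    split_ifs with hd
    · have h : (n.factorial / (d + 1)) * (d + 1) = n.factorial :=
        Nat.div_mul_cancel (Nat.dvd_factorial (by omega) hd)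
      have h' : ((n.factorial / (d + 1) : ℕ) : ℤ) * (d + 1) = (n.factorial : ℕ) := by
        exact_mod_cast h
      rw [← h']; ring
    · rw [coeff_eq_zero_of_natDegree_lt (by omega)]; simp
  · refine natDegree_sum_le_of_forall_le _ _ fun j hj => ?_
    exact (natDegree_C_mul_X_pow_le _ _).trans (by simpa using hj)
  · rw [X_pow_dvd_iff]
    intro d hd
    rcases d with _ | d
    · simp only [finsetSum_coeff, coeff_C_mul_X_pow]
      simp
    · rw [hcoeff, X_pow_dvd_iff.1 hX d (by omega)]; simp

lemma dvd_sub_of_forall_dvd_sum {p : ℕ} [Fact p.Prime] {R q a E : ℕ} (hp : R + q < p)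
    (t : ℤ) (u v : Fin R → ℤ)
    (ht : ∀ i, ¬ (p : ℤ) ∣ t + p ^ a * v i)
    (hv : ∀ i j, i ≠ j → ¬ (p : ℤ) ∣ v i - v j)
    (huv : ∀ i, (p : ℤ) ∣ u i - v i)
    (hP : ∀ P : ℤ[X], P.natDegree ≤ R + q → X ^ (q + 1) ∣ P →
      (p : ℤ) ^ E ∣ ∑ i, (P.eval (t + p ^ a * u i) - P.eval (t + p ^ a * v i)))
    (e : ℕ) (he : 1 ≤ e) (heE : e + a * R ≤ E) (i : Fin R) :
    (p : ℤ) ^ e ∣ u i - v i := by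
  have hprime : Prime (p : ℤ) := Nat.prime_iff_prime_int.1 Fact.out
  have hp0 : (p : ℤ) ≠ 0 := hprime.ne_zero
  induction e, he using Nat.le_induction generalizing i with
  | base => simpa using huv i
  | succ e he ih =>
    have ih' := fun l => ih (by omega) l
    set ℓ : ℤ[X] := C t + C ((p : ℤ) ^ a) * X with hℓ
    have hR : 1 ≤ R := i.pos
    have hcard : (Finset.univ.erase i).card = R - 1 := by simp
    have hdeg : ∀ (A : ℤ[X]) (w : Fin R → ℤ), A.natDegree ≤ 1 →
        (A ^ q * ∏ l ∈ Finset.univ.erase i, (X - C (w l))).natDegree < R + q := by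
      intro A w hA
      have h1 : (A ^ q).natDegree ≤ q := (natDegree_pow_le_of_le q hA).trans (by omega)
      have h2 : (∏ l ∈ Finset.univ.erase i, (X - C (w l))).natDegree = R - 1 := by
        rw [natDegree_prod_of_monic _ _ fun l _ => monic_X_sub_C _]
        simp only [natDegree_X_sub_C, Finset.sum_const, hcard, smul_eq_mul, mul_one]
      have := natDegree_mul_le (p := A ^ q) (q := ∏ l ∈ Finset.univ.erase i, (X - C (w l)))
      omega
    obtain ⟨P, hP', hPdeg, hPX⟩ := exists_derivative_eq_factorial_mul (R + q) q
      (X ^ q * ∏ l ∈ Finset.univ.erase i, (X - C (t + p ^ a * v l)))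
      (hdeg _ _ (by simp)) (dvd_mul_right _ _)
    obtain ⟨S, hS', -, -⟩ := exists_derivative_eq_factorial_mul (R + q) 0
      (ℓ ^ q * ∏ l ∈ Finset.univ.erase i, (X - C (v l)))
      (hdeg _ _ (by
        rw [hℓ, add_comm]
        exact natDegree_linear_le)) (by simp)
    have hcomp : derivative (P.comp ℓ - C ((p : ℤ) ^ (a * R)) * S) = 0 := by
      rw [derivative_sub, derivative_comp, derivative_C_mul, hP', hS']
      have hprod : (∏ l ∈ Finset.univ.erase i, (X - C (t + (p : ℤ) ^ a * v l))).comp ℓ =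
          C ((p : ℤ) ^ a) ^ (R - 1) * ∏ l ∈ Finset.univ.erase i, (X - C (v l)) := by
        rw [Polynomial.prod_comp, ← hcard, ← Finset.prod_const, ← Finset.prod_mul_distrib]
        refine Finset.prod_congr rfl fun l _ => ?_
        rw [sub_comp, X_comp, C_comp, C_add, C_mul, hℓ]
        ring
      have hℓ' : derivative ℓ = C ((p : ℤ) ^ a) := by simp [hℓ]
      rw [mul_comp, mul_comp, hprod, hℓ', C_comp, pow_comp, X_comp]
      have : C ((p : ℤ) ^ (a * R)) = C ((p : ℤ) ^ a) ^ (R - 1) * C ((p : ℤ) ^ a) := by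
        rw [← pow_succ, Nat.sub_add_cancel hR, ← C_pow, ← pow_mul]
      rw [this]
      ring
    obtain ⟨c, hc⟩ : ∃ c, P.comp ℓ - C ((p : ℤ) ^ (a * R)) * S = C c :=
      ⟨_, eq_C_of_natDegree_eq_zero (derivative_eq_zero.1 hcomp)⟩
    have hval : ∀ z, P.eval (t + p ^ a * z) = (p : ℤ) ^ (a * R) * S.eval z + c := by
      intro z
      have := congrArg (eval z) hc
      simp only [eval_sub, eval_comp, eval_mul, eval_C, hℓ, eval_add, eval_X] at this
      linarith
    have h1 : (p : ℤ) ^ (e + 1) ∣ ∑ l, (S.eval (u l) - S.eval (v l)) := by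
      have h2 := (pow_dvd_pow (p : ℤ) heE).trans (hP P hPdeg hPX)
      simp only [hval, add_sub_add_right_eq_sub, ← mul_sub, ← Finset.mul_sum] at h2
      rw [add_comm (e + 1), pow_add] at h2
      exact (mul_dvd_mul_iff_left (pow_ne_zero _ hp0)).1 h2
    have hder : ∀ z, (derivative S).eval z = ((R + q).factorial : ℤ) *
        ((t + p ^ a * z) ^ q * ∏ l ∈ Finset.univ.erase i, (z - v l)) := by
      intro z
      rw [hS']
      simp [hℓ, eval_prod]
    have h3 : ∀ l, (p : ℤ) ^ (e + 1) ∣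
        S.eval (u l) - S.eval (v l) - (derivative S).eval (v l) * (u l - v l) := by
      intro l
      obtain ⟨m, hm⟩ := S.binomExpansion (v l) (u l - v l)
      rw [add_sub_cancel] at hm
      rw [hm]
      have : (p : ℤ) ^ (e + 1) ∣ (u l - v l) ^ 2 := by
        refine (pow_dvd_pow (p : ℤ) (by omega : e + 1 ≤ e * 2)).trans ?_
        rw [pow_mul]
        exact pow_dvd_pow_of_dvd (ih' l) 2
      have h6 := this.mul_left m
      rwa [add_assoc, add_sub_cancel_left, add_sub_cancel_left]
    have h4 : (p : ℤ) ^ (e + 1) ∣ ∑ l, (derivative S).eval (v l) * (u l - v l) := by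
      have := dvd_sub h1 (Finset.dvd_sum fun l (_ : l ∈ Finset.univ) => h3 l)
      rw [← Finset.sum_sub_distrib] at this
      simpa using this
    have h5 : ∑ l, (derivative S).eval (v l) * (u l - v l) =
        (derivative S).eval (v i) * (u i - v i) := by
      refine Finset.sum_eq_single i (fun l _ hl => ?_) (by simp)
      rw [hder, Finset.prod_eq_zero (Finset.mem_erase.2 ⟨hl, Finset.mem_univ l⟩) (sub_self _)]
      simp
    rw [h5] at h4
    refine (IsCoprime.pow_left ?_).dvd_of_dvd_mul_left h4
    rw [Prime.coprime_iff_not_dvd hprime, hder]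
    intro hd
    rcases hprime.dvd_or_dvd hd with hd | hd
    · have := (Nat.Prime.dvd_factorial Fact.out).1 (Int.natCast_dvd_natCast.1 hd)
      omega
    rcases hprime.dvd_or_dvd hd with hd | hd
    · exact ht i (hprime.dvd_of_dvd_pow hd)
    · obtain ⟨l, hl, hl'⟩ := (Prime.dvd_finsetProd_iff hprime _).1 hd
      exact hv i l (Finset.ne_of_mem_erase hl).symm hl'

/-- The integers in `[0, p ^ M)` congruent to `ξ` modulo `p ^ a`. -/
def residueClass (p M a ξ : ℕ) : Finset ℕ :=
  (range (p ^ M)).filter fun x => x ≡ ξ [MOD p ^ a]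

/-- The residues modulo `p ^ b` refining the residue `ξ` modulo `p ^ a`. -/
def refinements (p a b ξ : ℕ) : Finset ℕ := residueClass p b a ξ

open Classical in
/-- The pairs of vectors with coordinates in the sets `A i` and equal power sums of
degrees `1, …, k`. -/
noncomputable def equalPowerSums {ι : Type} [Fintype ι] (k : ℕ) (A : ι → Finset ℕ) :
    Finset ((ι → ℕ) × (ι → ℕ)) :=
  (Fintype.piFinset A ×ˢ Fintype.piFinset A).filter fun z : (ι → ℕ) × (ι → ℕ) =>
    ∀ j ∈ Icc 1 k, ∑ i, z.1 i ^ j = ∑ i, z.2 i ^ j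

/-- `F a ξ` behaves like the absolute value of the Vinogradov exponential sum of degree `k` over
`residueClass p M a ξ`: it is subadditive, and its moments of order `2 * s` count solutions of the
Vinogradov system. -/
structure IsExpSumModel (p k s M : ℕ) {Ω : Type} [Fintype Ω] (F : ℕ → ℕ → Ω → ℝ) : Prop where
  nonneg : ∀ a ξ ω, 0 ≤ F a ξ ω
  le_sum : ∀ a b ξ ω, a ≤ b → F a ξ ω ≤ ∑ ζ ∈ refinements p a b ξ, F b ζ ω
  expect_prod : ∀ (ι : Type) [Fintype ι], Fintype.card ι = s → ∀ a ξ : ι → ℕ,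
    𝔼 ω, ∏ i, F (a i) (ξ i) ω ^ 2 =
      ((equalPowerSums k fun i => residueClass p M (a i) (ξ i)).card : ℝ)

/-- The Vinogradov exponential sum of degree `k` over `A`, with frequencies in `ZMod N`. -/
noncomputable def vinogradovSum (N k : ℕ) [NeZero N] (A : Finset ℕ) (α : Fin k → ZMod N) : ℂ :=
  ∑ x ∈ A, ZMod.stdAddChar (∑ j : Fin k, α j * (x : ZMod N) ^ ((j : ℕ) + 1))

lemma addChar_sum_eq_prod {A M ι : Type*} [AddCommMonoid A] [CommMonoid M] (χ : AddChar A M)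
    (t : Finset ι) (g : ι → A) : χ (∑ i ∈ t, g i) = ∏ i ∈ t, χ (g i) := by
  classical
  induction t using Finset.induction_on with
  | empty => simp
  | insert i t hi ih => rw [sum_insert hi, prod_insert hi, AddChar.map_add_eq_mul, ih]

lemma expect_stdAddChar_dotProduct {N k : ℕ} [NeZero N] (w : Fin k → ZMod N) :
    𝔼 α : Fin k → ZMod N, ZMod.stdAddChar (∑ j, α j * w j) = if w = 0 then (1 : ℂ) else 0 := by
  let L : (Fin k → ZMod N) →+ ZMod N :=
    { toFun := fun α => ∑ j, α j * w j
      map_zero' := by simp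
      map_add' := fun α β => by simp [add_mul, sum_add_distrib] }
  have h := AddChar.expect_eq_ite ((ZMod.stdAddChar (N := N)).compAddMonoidHom L)
  have h0 : (ZMod.stdAddChar (N := N)).compAddMonoidHom L = 0 ↔ w = 0 := by
    constructor
    · intro h
      ext j
      have := DFunLike.congr_fun h (Pi.single j 1)
      have h1 : (ZMod.stdAddChar (w j) : ℂ) = ZMod.stdAddChar (0 : ZMod N) := by
        simpa [L, Pi.single_apply] using this
      simpa using ZMod.injective_stdAddChar h1
    · rintro rfl
      ext α
      simp [L]
  simp only [h0] at h
  exact h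

lemma expect_prod_norm_vinogradovSum_sq {N k : ℕ} [NeZero N] {ι : Type} [Fintype ι]
    (X : ℕ) (hX : 1 ≤ X) (hN : Fintype.card ι * X ^ k < N) (A : ι → Finset ℕ)
    (hA : ∀ i, ∀ x ∈ A i, x < X) :
    𝔼 α, ∏ i, ‖vinogradovSum N k (A i) α‖ ^ 2 = ((equalPowerSums k A).card : ℝ) := by
  classical
  let ψ : (ι → ℕ) → Fin k → ZMod N := fun x j => ∑ i, (x i : ZMod N) ^ ((j : ℕ) + 1)
  have hprod : ∀ α, ∏ i, vinogradovSum N k (A i) α =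
      ∑ x ∈ Fintype.piFinset A, ZMod.stdAddChar (∑ j, α j * ψ x j) := by
    intro α
    simp only [vinogradovSum]
    rw [prod_univ_sum]
    refine sum_congr rfl fun x _ => ?_
    rw [← addChar_sum_eq_prod, sum_comm]
    simp [ψ, mul_sum]
  have hψ : ∀ x ∈ Fintype.piFinset A, ∀ y ∈ Fintype.piFinset A,
      (ψ x - ψ y = 0 ↔ ∀ j ∈ Icc 1 k, ∑ i, x i ^ j = ∑ i, y i ^ j) := by
    have hlt : ∀ x ∈ Fintype.piFinset A, ∀ j ∈ Icc 1 k, ∑ i, x i ^ j < N := by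
      intro x hx j hj
      refine lt_of_le_of_lt ?_ hN
      refine (sum_le_card_nsmul _ _ (X ^ k) fun i _ => ?_).trans (by simp)
      rw [mem_Icc] at hj
      exact (Nat.pow_le_pow_left (hA i _ (Fintype.mem_piFinset.1 hx i)).le j).trans
        (Nat.pow_le_pow_right hX hj.2)
    intro x hx y hy
    have key : ∀ j ∈ Icc 1 k, ((∑ i, (x i : ZMod N) ^ j = ∑ i, (y i : ZMod N) ^ j) ↔
        ∑ i, x i ^ j = ∑ i, y i ^ j) := by
      intro j hj
      rw [← Nat.mod_eq_of_lt (hlt x hx j hj), ← Nat.mod_eq_of_lt (hlt y hy j hj),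
        ← ZMod.natCast_eq_natCast_iff']
      push_cast
      rfl
    rw [sub_eq_zero]
    constructor
    · intro h j hj
      rw [← key j hj]
      rw [mem_Icc] at hj
      have := congrFun h ⟨j - 1, by omega⟩
      simpa [ψ, Nat.sub_add_cancel hj.1] using this
    · intro h
      ext j
      have hj : (j : ℕ) + 1 ∈ Icc 1 k := by simp
      exact (key _ hj).2 (h _ hj)
  have hC : (𝔼 α, ∏ i, ‖vinogradovSum N k (A i) α‖ ^ 2 : ℂ) = ((equalPowerSums k A).card : ℂ) := by
    calc (𝔼 α, ∏ i, (‖vinogradovSum N k (A i) α‖ : ℂ) ^ 2)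
        = 𝔼 α : Fin k → ZMod N, ∑ x ∈ Fintype.piFinset A, ∑ y ∈ Fintype.piFinset A,
            (ZMod.stdAddChar (∑ j, α j * (ψ x - ψ y) j) : ℂ) := by
          refine expect_congr rfl fun α _ => ?_
          rw [prod_pow, ← Complex.ofReal_prod, ← norm_prod, hprod, ← Complex.mul_conj', map_sum,
            sum_mul_sum]
          refine sum_congr rfl fun x _ => sum_congr rfl fun y _ => ?_
          rw [← AddChar.map_neg_eq_conj, ← AddChar.map_add_eq_mul]
          congr 1
          simp only [Pi.sub_apply, mul_sub, sum_sub_distrib, ← sub_eq_add_neg]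
      _ = ∑ x ∈ Fintype.piFinset A, ∑ y ∈ Fintype.piFinset A,
            if ψ x - ψ y = 0 then (1 : ℂ) else 0 := by
          rw [expect_sum_comm]
          refine sum_congr rfl fun x _ => ?_
          rw [expect_sum_comm]
          exact sum_congr rfl fun y _ => expect_stdAddChar_dotProduct _
      _ = ((equalPowerSums k A).card : ℂ) := by
          rw [equalPowerSums, card_filter, sum_product]
          push_cast
          refine sum_congr rfl fun x hx => sum_congr rfl fun y hy => ?_
          simp only [hψ x hx y hy]
  exact_mod_cast hC

lemma sum_residueClass_eq {E : Type*} [AddCommMonoid E] {p : ℕ} (hp : 0 < p) (M : ℕ) {a b : ℕ}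
    (hab : a ≤ b) (ξ : ℕ) (g : ℕ → E) :
    ∑ x ∈ residueClass p M a ξ, g x =
      ∑ ζ ∈ refinements p a b ξ, ∑ x ∈ residueClass p M b ζ, g x := by
  have hmaps : ∀ x ∈ residueClass p M a ξ, x % p ^ b ∈ refinements p a b ξ := by
    intro x hx
    simp only [refinements, residueClass, mem_filter, mem_range] at hx ⊢
    refine ⟨Nat.mod_lt _ (by positivity), ?_⟩
    exact ((Nat.mod_modEq x (p ^ b)).of_dvd (pow_dvd_pow p hab)).trans hx.2
  rw [← sum_fiberwise_of_maps_to hmaps]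
  refine sum_congr rfl fun ζ hζ => sum_congr ?_ fun _ _ => rfl
  ext x
  simp only [refinements, residueClass, mem_filter, mem_range] at hζ ⊢
  have : x % p ^ b = ζ ↔ x ≡ ζ [MOD p ^ b] := by rw [Nat.ModEq, Nat.mod_eq_of_lt hζ.1]
  rw [this]
  constructor
  · rintro ⟨⟨h1, h2⟩, h3⟩; exact ⟨h1, h3⟩
  · rintro ⟨h1, h3⟩; exact ⟨⟨h1, (h3.of_dvd (pow_dvd_pow p hab)).trans hζ.2⟩, h3⟩

lemma card_refinements_le {p : ℕ} (hp : 0 < p) {a b : ℕ} (hab : a ≤ b) (ξ : ℕ) :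
    (refinements p a b ξ).card ≤ p ^ (b - a) := by
  rw [← card_range (p ^ (b - a))]
  refine card_le_card_of_injOn (fun x => x / p ^ a) ?_ ?_
  · intro x hx
    simp only [refinements, residueClass, coe_filter, mem_range, Set.mem_ofPred_eq] at hx
    simp only [coe_range, Set.mem_Iio]
    rw [Nat.div_lt_iff_lt_mul (by positivity), ← pow_add, Nat.sub_add_cancel hab]
    exact hx.1
  · intro x hx y hy hxy
    simp only [refinements, residueClass, coe_filter, mem_range, Set.mem_ofPred_eq] at hx hy
    have h1 : x % p ^ a = y % p ^ a := hx.2.trans hy.2.symm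
    rw [← Nat.div_add_mod x (p ^ a), ← Nat.div_add_mod y (p ^ a), h1]
    simp only at hxy
    rw [hxy]

lemma exists_isExpSumModel {p : ℕ} (hp : 0 < p) (k s M : ℕ) :
    ∃ (Ω : Type) (_ : Fintype Ω) (_ : Nonempty Ω) (F : ℕ → ℕ → Ω → ℝ),
      IsExpSumModel p k s M F := by
  refine ⟨Fin k → ZMod (s * (p ^ M) ^ k + 1), inferInstance, inferInstance,
    fun a ξ α => ‖vinogradovSum _ k (residueClass p M a ξ) α‖, ⟨?_, ?_, ?_⟩⟩
  · intro a ξ ω; exact norm_nonneg _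
  · intro a b ξ ω hab
    simp only [vinogradovSum]
    rw [sum_residueClass_eq hp M hab ξ]
    exact norm_sum_le _ _
  · intro ι _ hι a ξ
    refine expect_prod_norm_vinogradovSum_sq (p ^ M) (Nat.one_le_pow _ _ hp) (by simp [hι]) _ ?_
    intro i x hx
    simp only [residueClass, mem_filter, mem_range] at hx
    exact hx.1

lemma sum_eval_eq_of_sum_pow_eq {ι : Type*} [Fintype ι] {k : ℕ} {x y : ι → ℤ}
    (h : ∀ j ∈ Icc 1 k, ∑ i, x i ^ j = ∑ i, y i ^ j) {P : ℤ[X]} (hP : P.natDegree ≤ k) :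
    ∑ i, P.eval (x i) = ∑ i, P.eval (y i) := by
  simp only [eval_eq_sum_range' (Nat.lt_succ_of_le hP)]
  rw [sum_comm, sum_comm (s := univ)]
  refine sum_congr rfl fun j hj => ?_
  rw [← mul_sum, ← mul_sum]
  rcases Nat.eq_zero_or_pos j with rfl | hj0
  · simp
  · rw [h j (mem_Icc.2 ⟨hj0, by simpa [Nat.lt_succ_iff] using hj⟩)]

lemma mem_equalPowerSums {ι : Type} [Fintype ι] {k : ℕ} {A : ι → Finset ℕ}
    {z : (ι → ℕ) × (ι → ℕ)} :
    z ∈ equalPowerSums k A ↔ (∀ i, z.1 i ∈ A i) ∧ (∀ i, z.2 i ∈ A i) ∧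
      ∀ j ∈ Icc 1 k, ∑ i, z.1 i ^ j = ∑ i, z.2 i ^ j := by
  simp only [equalPowerSums, mem_filter, mem_product, Fintype.mem_piFinset, and_assoc]

lemma mem_residueClass {p M a ξ x : ℕ} :
    x ∈ residueClass p M a ξ ↔ x < p ^ M ∧ x ≡ ξ [MOD p ^ a] := by
  simp [residueClass]

/-- The number of solutions of the Vinogradov system with variables in `[0, p ^ m)`. -/
noncomputable def vinogradovCount (p k s m : ℕ) : ℕ :=
  (equalPowerSums k fun _ : Fin s => range (p ^ m)).card

lemma card_equalPowerSums_residueClass_le {p : ℕ} (hp : 0 < p) {k s M a : ℕ} (ha : a ≤ M) (ξ : ℕ) :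
    (equalPowerSums k fun _ : Fin s => residueClass p M a ξ).card ≤
      vinogradovCount p k s (M - a) := by
  have hpa : 0 < p ^ a := by positivity
  refine card_le_card_of_injOn (fun z => (fun i => z.1 i / p ^ a, fun i => z.2 i / p ^ a)) ?_ ?_
  · intro z hz
    rw [mem_coe, mem_equalPowerSums] at hz ⊢
    obtain ⟨h1, h2, h3⟩ := hz
    have hlt : ∀ x ∈ residueClass p M a ξ, x / p ^ a ∈ range (p ^ (M - a)) := by
      intro x hx
      rw [mem_range, Nat.div_lt_iff_lt_mul hpa, ← pow_add, Nat.sub_add_cancel ha]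
      exact (mem_residueClass.1 hx).1
    refine ⟨fun i => hlt _ (h1 i), fun i => hlt _ (h2 i), fun j hj => ?_⟩
    have hdiv : ∀ x ∈ residueClass p M a ξ,
        (p : ℤ) ^ (a * j) * ((x / p ^ a : ℕ) : ℤ) ^ j =
          ((X - C ((ξ % p ^ a : ℕ) : ℤ)) ^ j : ℤ[X]).eval (x : ℤ) := by
      intro x hx
      have h4 : x % p ^ a = ξ % p ^ a := (mem_residueClass.1 hx).2
      have h5 : ((p ^ a * (x / p ^ a) + x % p ^ a : ℕ) : ℤ) = x := by rw [Nat.div_add_mod]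
      rw [← h4, eval_pow, eval_sub, eval_X, eval_C, pow_mul, ← mul_pow]
      congr 1
      push_cast at h5 ⊢
      linarith
    have h6 := sum_eval_eq_of_sum_pow_eq (k := k) (x := fun i => (z.1 i : ℤ))
      (y := fun i => (z.2 i : ℤ)) (by exact_mod_cast h3)
      (P := (X - C ((ξ % p ^ a : ℕ) : ℤ)) ^ j) (by
        rw [natDegree_pow, natDegree_X_sub_C, mul_one]
        exact (mem_Icc.1 hj).2)
    simp only [← hdiv _ (h1 _), ← hdiv _ (h2 _), ← mul_sum] at h6
    have h7 := mul_left_cancel₀ (by positivity : (p : ℤ) ^ (a * j) ≠ 0) h6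
    exact_mod_cast h7
  · intro z hz w hw hzw
    rw [mem_coe, mem_equalPowerSums] at hz hw
    simp only [Prod.mk.injEq] at hzw
    have key : ∀ x ∈ residueClass p M a ξ, ∀ y ∈ residueClass p M a ξ,
        x / p ^ a = y / p ^ a → x = y := by
      intro x hx y hy hxy
      have h4 : x % p ^ a = y % p ^ a :=
        (mem_residueClass.1 hx).2.trans (mem_residueClass.1 hy).2.symm
      rw [← Nat.div_add_mod x (p ^ a), ← Nat.div_add_mod y (p ^ a), h4, hxy]
    refine Prod.ext (funext fun i => ?_) (funext fun i => ?_)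
    · exact key _ (hz.1 i) _ (hw.1 i) (congrFun hzw.1 i)
    · exact key _ (hz.2.1 i) _ (hw.2.1 i) (congrFun hzw.2 i)

/-- The residues `ξ i` agree modulo `p ^ a` but are pairwise distinct modulo `p ^ (a + 1)`. -/
def IsTransversal (p a : ℕ) {R : ℕ} (ξ : Fin R → ℕ) : Prop :=
  ∀ i j, ξ i ≡ ξ j [MOD p ^ a] ∧ (i ≠ j → ¬ ξ i ≡ ξ j [MOD p ^ (a + 1)])

lemma modEq_of_transversal {p : ℕ} [Fact p.Prime] {R q a b η : ℕ} (hp : R + q < p)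
    (hR : R ≤ q + 1) (hq : 2 ≤ q) (hb : 1 ≤ b) (hab : q * a ≤ b) {ξ : Fin R → ℕ}
    (hξ : IsTransversal p a ξ) (hη : ∀ i, ¬ ξ i ≡ η [MOD p]) {κ : Type} [Fintype κ]
    {x y : Fin R ⊕ κ → ℕ}
    (hxy : ∀ j ∈ Icc 1 (R + q), ∑ i, x i ^ j = ∑ i, y i ^ j)
    (hx : ∀ i, x (Sum.inl i) ≡ ξ i [MOD p ^ (a + 1)])
    (hy : ∀ i, y (Sum.inl i) ≡ ξ i [MOD p ^ (a + 1)])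
    (hx' : ∀ l, x (Sum.inr l) ≡ η [MOD p ^ b]) (hy' : ∀ l, y (Sum.inr l) ≡ η [MOD p ^ b])
    (i : Fin R) : x (Sum.inl i) ≡ y (Sum.inl i) [MOD p ^ (q * b)] := by
  have hpa0 : (p : ℤ) ^ a ≠ 0 := pow_ne_zero _ (by exact_mod_cast (Fact.out : p.Prime).ne_zero)
  have hξa : ∀ l, ξ l ≡ ξ i [MOD p ^ a] := fun l => (hξ l i).1
  have hdvd : p ^ a ∣ p ^ (a + 1) := pow_dvd_pow p (Nat.le_succ a)
  have hu : ∀ l, ∃ u : ℤ, (x (Sum.inl l) : ℤ) - ξ i = (p : ℤ) ^ a * u := fun l => by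
    have := Nat.modEq_iff_dvd.1 (((hx l).of_dvd hdvd).trans (hξa l)).symm
    exact_mod_cast this
  have hv : ∀ l, ∃ u : ℤ, (y (Sum.inl l) : ℤ) - ξ i = (p : ℤ) ^ a * u := fun l => by
    have := Nat.modEq_iff_dvd.1 (((hy l).of_dvd hdvd).trans (hξa l)).symm
    exact_mod_cast this
  choose u hu using hu
  choose v hv using hv
  have hxu : ∀ l, ((ξ i : ℤ) - η) + p ^ a * u l = x (Sum.inl l) - η := fun l => by
    rw [← hu]; ring
  have hyv : ∀ l, ((ξ i : ℤ) - η) + p ^ a * v l = y (Sum.inl l) - η := fun l => by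
    rw [← hv]; ring
  have haq : a ≤ q * a := Nat.le_mul_of_pos_left a (by omega)
  have hbq : 2 * b ≤ q * b := Nat.mul_le_mul_right b hq
  have hexp : (q * b - a) + a * R ≤ b * (q + 1) := by
    have h1 : a * R ≤ a * (q + 1) := Nat.mul_le_mul_left a hR
    have h2 : a * (q + 1) = q * a + a := by ring
    have h3 : b * (q + 1) = q * b + b := by ring
    omega
  have key := dvd_sub_of_forall_dvd_sum (a := a) (E := b * (q + 1)) hp ((ξ i : ℤ) - η) u v
    ?_ ?_ ?_ ?_ (q * b - a) (by omega) hexp i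
  · refine (Nat.modEq_iff_dvd.2 ?_).symm
    have h1 : (x (Sum.inl i) : ℤ) - y (Sum.inl i) = (p : ℤ) ^ a * (u i - v i) := by
      rw [mul_sub, ← hu, ← hv]; ring
    rw [h1]
    have h2 := mul_dvd_mul_left ((p : ℤ) ^ a) key
    rw [← pow_add, Nat.add_sub_cancel' (by omega)] at h2
    exact_mod_cast h2
  · intro l hl
    rw [hyv] at hl
    refine hη l (((hy l).of_dvd (dvd_pow_self p (Nat.succ_ne_zero a))).symm.trans ?_)
    exact (Nat.modEq_iff_dvd.2 hl).symm
  · intro l m hlm hl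
    refine (hξ l m).2 hlm ((hy l).symm.trans (Nat.ModEq.trans ?_ (hy m)))
    refine (Nat.modEq_iff_dvd.2 ?_).symm
    have h1 : (y (Sum.inl l) : ℤ) - y (Sum.inl m) = (p : ℤ) ^ a * (v l - v m) := by
      rw [mul_sub, ← hv, ← hv]; ring
    rw [h1]
    push_cast
    rw [pow_succ]
    exact mul_dvd_mul_left _ hl
  · intro l
    have h1 : (x (Sum.inl l) : ℤ) - y (Sum.inl l) = (p : ℤ) ^ a * (u l - v l) := by
      rw [mul_sub, ← hu, ← hv]; ring
    have h2 := Nat.modEq_iff_dvd.1 ((hy l).trans (hx l).symm)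
    rw [h1] at h2
    push_cast at h2
    rw [pow_succ] at h2
    exact (mul_dvd_mul_iff_left hpa0).1 h2
  · intro P hPdeg hPX
    have h1 := sum_eval_eq_of_sum_pow_eq (k := R + q) (x := fun i => (x i : ℤ))
      (y := fun i => (y i : ℤ)) (by exact_mod_cast hxy) (P := P.comp (X - C (η : ℤ))) (by
        rwa [natDegree_comp, natDegree_X_sub_C, mul_one])
    simp only [Fintype.sum_sum_type, eval_comp, eval_sub, eval_X, eval_C] at h1
    have h2 : ∀ w : ℕ, w ≡ η [MOD p ^ b] → (p : ℤ) ^ (b * (q + 1)) ∣ P.eval ((w : ℤ) - η) := by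
      intro w hw
      obtain ⟨S, rfl⟩ := hPX
      rw [eval_mul, eval_pow, eval_X, pow_mul]
      refine (pow_dvd_pow_of_dvd ?_ _).mul_right _
      exact_mod_cast Nat.modEq_iff_dvd.1 hw.symm
    have h3 : ∑ l, (P.eval (((ξ i : ℤ) - η) + p ^ a * u l) -
        P.eval (((ξ i : ℤ) - η) + p ^ a * v l)) =
        ∑ l, P.eval ((y (Sum.inr l) : ℤ) - η) - ∑ l, P.eval ((x (Sum.inr l) : ℤ) - η) := by
      simp only [hxu, hyv, sum_sub_distrib]
      linarith
    rw [h3]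
    exact dvd_sub (dvd_sum fun l _ => h2 _ (hy' l)) (dvd_sum fun l _ => h2 _ (hx' l))

section Model

variable {p k s M R q : ℕ} {Ω : Type} [Fintype Ω] {F : ℕ → ℕ → Ω → ℝ}

lemma IsExpSumModel.expect_pow_le (h : IsExpSumModel p k s M F) (hp : 0 < p) {a : ℕ}
    (ha : a ≤ M) (ξ : ℕ) :
    𝔼 ω, F a ξ ω ^ (2 * s) ≤ (vinogradovCount p k s (M - a) : ℝ) := by
  have h1 := h.expect_prod (Fin s) (by simp) (fun _ => a) (fun _ => ξ)
  simp only [prod_const, card_univ, Fintype.card_fin, ← pow_mul] at h1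
  rw [h1]
  exact_mod_cast card_equalPowerSums_residueClass_le hp ha ξ

lemma IsExpSumModel.expect_transversal_le [Fact p.Prime]
    (h : IsExpSumModel p (R + q) (R * (q + 1)) M F) (hp : R + q < p)
    (hR : R ≤ q + 1) (hq : 2 ≤ q) {a b η : ℕ} (hb : 1 ≤ b) (hab : q * a ≤ b) {ξ ν : Fin R → ℕ}
    (hξ : IsTransversal p a ξ) (hη : ∀ i, ¬ ξ i ≡ η [MOD p]) (hν : ∀ l, ν l ≡ η [MOD p ^ b]) :
    𝔼 ω, (∏ i, F (a + 1) (ξ i) ω ^ 2) * (∏ l, F (b + 1) (ν l) ω ^ 2) ^ q ≤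
      ∑ ζ ∈ Fintype.piFinset fun i => refinements p (a + 1) (q * b) (ξ i),
        𝔼 ω, (∏ i, F (q * b) (ζ i) ω ^ 2) * (∏ l, F (b + 1) (ν l) ω ^ 2) ^ q := by
  classical
  have hcount : ∀ (c : ℕ) (ζ : Fin R → ℕ),
      𝔼 ω, (∏ i, F c (ζ i) ω ^ 2) * (∏ l, F (b + 1) (ν l) ω ^ 2) ^ q =
        ((equalPowerSums (R + q) fun i : Fin R ⊕ (Fin R × Fin q) =>
          residueClass p M (Sum.elim (fun _ => c) (fun _ => b + 1) i)
            (Sum.elim ζ (fun l => ν l.1) i)).card : ℝ) := by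
    intro c ζ
    rw [← h.expect_prod (Fin R ⊕ (Fin R × Fin q)) (by simp; ring)]
    refine expect_congr rfl fun ω _ => ?_
    simp [Fintype.prod_sum_type, Fintype.prod_prod_type, prod_pow]
    ring
  simp only [hcount]
  rw [← Nat.cast_sum, Nat.cast_le]
  refine (card_le_card ?_).trans card_biUnion_le
  intro z hz
  rw [mem_equalPowerSums] at hz
  obtain ⟨h1, h2, h3⟩ := hz
  have haq : a ≤ q * a := Nat.le_mul_of_pos_left a (by omega)
  have hbq : 2 * b ≤ q * b := Nat.mul_le_mul_right b hq
  have hle : p ^ (a + 1) ∣ p ^ (q * b) := pow_dvd_pow p (by omega)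
  have hpos : 0 < p ^ (q * b) := pow_pos (Fact.out : p.Prime).pos _
  have key := modEq_of_transversal hp hR hq hb hab hξ hη h3
    (fun i => (mem_residueClass.1 (h1 (Sum.inl i))).2)
    (fun i => (mem_residueClass.1 (h2 (Sum.inl i))).2)
    (fun l => ((mem_residueClass.1 (h1 (Sum.inr l))).2.of_dvd
      (pow_dvd_pow p (Nat.le_succ b))).trans (hν l.1))
    (fun l => ((mem_residueClass.1 (h2 (Sum.inr l))).2.of_dvd
      (pow_dvd_pow p (Nat.le_succ b))).trans (hν l.1))
  rw [mem_biUnion]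
  refine ⟨fun i => z.1 (Sum.inl i) % p ^ (q * b), Fintype.mem_piFinset.2 fun i => ?_,
    mem_equalPowerSums.2 ⟨?_, ?_, h3⟩⟩
  · refine mem_residueClass.2 ⟨Nat.mod_lt _ hpos, ((Nat.mod_modEq _ _).of_dvd hle).trans ?_⟩
    exact (mem_residueClass.1 (h1 (Sum.inl i))).2
  · rintro (i | l)
    · exact mem_residueClass.2 ⟨(mem_residueClass.1 (h1 (Sum.inl i))).1, (Nat.mod_modEq _ _).symm⟩
    · exact h1 (Sum.inr l)
  · rintro (i | l)
    · exact mem_residueClass.2 ⟨(mem_residueClass.1 (h2 (Sum.inl i))).1,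
        (key i).symm.trans (Nat.mod_modEq _ _).symm⟩
    · exact h2 (Sum.inr l)

end Model

section Tools

variable {Ω : Type*} [Fintype Ω]

lemma expect_rpow_mul_rpow_le {f g : Ω → ℝ} (hf : ∀ ω, 0 ≤ f ω) (hg : ∀ ω, 0 ≤ g ω) {θ : ℝ}
    (h0 : 0 < θ) (h1 : θ < 1) :
    𝔼 ω, f ω ^ θ * g ω ^ (1 - θ) ≤ (𝔼 ω, f ω) ^ θ * (𝔼 ω, g ω) ^ (1 - θ) := by
  have h2 : 0 < 1 - θ := by linarith
  have hpq : (1 / θ).HolderConjugate (1 / (1 - θ)) := by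
    rw [Real.holderConjugate_iff]
    exact ⟨by rw [lt_div_iff₀ h0]; linarith, by simp⟩
  have h := Real.inner_le_Lp_mul_Lq_of_nonneg univ hpq
    (f := fun ω => f ω ^ θ) (g := fun ω => g ω ^ (1 - θ))
    (fun ω _ => Real.rpow_nonneg (hf ω) _) (fun ω _ => Real.rpow_nonneg (hg ω) _)
  simp only [one_div, inv_inv, Real.rpow_rpow_inv (hf _) h0.ne',
    Real.rpow_rpow_inv (hg _) h2.ne'] at h
  have hc : (0 : ℝ) ≤ (Fintype.card Ω : ℝ) := by positivity
  simp only [Fintype.expect_eq_sum_div_card]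
  rw [Real.div_rpow (sum_nonneg fun ω _ => hf ω) hc, Real.div_rpow (sum_nonneg fun ω _ => hg ω) hc,
    div_mul_div_comm, ← Real.rpow_add_of_nonneg hc h0.le h2.le, add_sub_cancel, Real.rpow_one]
  exact div_le_div_of_nonneg_right h hc

lemma prod_le_sum_pow {R : ℕ} (hR : 1 ≤ R) {f : Fin R → ℝ} (hf : ∀ i, 0 ≤ f i) :
    ∏ i, f i ≤ ∑ i, f i ^ R := by
  have : Nonempty (Fin R) := ⟨⟨0, hR⟩⟩
  obtain ⟨m, -, hm⟩ := exists_max_image univ f univ_nonempty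
  calc ∏ i, f i ≤ ∏ _i : Fin R, f m := prod_le_prod (fun i _ => hf i) fun i _ => hm i (mem_univ i)
    _ = f m ^ R := by simp
    _ ≤ ∑ i, f i ^ R :=
        single_le_sum (f := fun i => f i ^ R) (fun i _ => pow_nonneg (hf i) R) (mem_univ m)

lemma exists_le_mul_or_exists_injective {S : Finset ℕ} (hS : S.Nonempty) {f : ℕ → ℝ}
    (hf : ∀ i, 0 ≤ f i) (t : ℕ) :
    (∃ i ∈ S, ∑ j ∈ S, f j ≤ t * f i) ∨
      ∃ c : Fin t → ℕ, Function.Injective c ∧ (∀ l, c l ∈ S) ∧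
        ∀ l, ∑ j ∈ S, f j ≤ (S.card : ℝ) ^ 2 * f (c l) := by
  classical
  obtain ⟨m, hmS, hm⟩ := exists_max_image S f hS
  have hle : ∑ j ∈ S, f j ≤ S.card * f m := by
    simpa using sum_le_card_nsmul S f (f m) hm
  set B := S.filter fun i => f m ≤ S.card * f i with hB
  have hc : (0 : ℝ) < S.card := by exact_mod_cast hS.card_pos
  by_cases ht : t ≤ B.card
  · right
    obtain ⟨e⟩ : Nonempty (Fin t ↪ B) :=
      Function.Embedding.nonempty_of_card_le (by simpa using ht)
    refine ⟨fun l => e l, fun l l' h => e.injective (Subtype.ext h),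
      fun l => (mem_filter.1 (e l).2).1, fun l => hle.trans ?_⟩
    rw [sq, mul_assoc]
    exact mul_le_mul_of_nonneg_left (mem_filter.1 (e l).2).2 hc.le
  · left
    refine ⟨m, hmS, ?_⟩
    rw [← sum_filter_add_sum_filter_not S (fun i => f m ≤ S.card * f i)]
    have h1 : ∑ j ∈ B, f j ≤ B.card * f m := by
      simpa using sum_le_card_nsmul B f (f m) fun i hi => hm i (mem_filter.1 hi).1
    have h2 : ∑ j ∈ S.filter (fun i => ¬ f m ≤ S.card * f i), f j ≤ f m := by
      have h3 : ∀ j ∈ S.filter (fun i => ¬ f m ≤ S.card * f i), f j ≤ f m / S.card := by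
        intro j hj
        rw [le_div_iff₀ hc, mul_comm]
        exact (not_le.1 (mem_filter.1 hj).2).le
      refine (sum_le_card_nsmul _ _ _ h3).trans ?_
      rw [nsmul_eq_mul]
      calc _ ≤ (S.card : ℝ) * (f m / S.card) := by
            refine mul_le_mul_of_nonneg_right ?_ (div_nonneg (hf m) hc.le)
            exact_mod_cast card_filter_le _ _
        _ = f m := by field_simp
    have h4 : (B.card : ℝ) + 1 ≤ t := by exact_mod_cast not_le.1 ht
    nlinarith [hf m]

/-- The tuples of `t` distinct elements of `S`. -/
def injectiveTuples (S : Finset ℕ) (t : ℕ) : Finset (Fin t → ℕ) :=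
  (Fintype.piFinset fun _ => S).filter Function.Injective

lemma mem_injectiveTuples {S : Finset ℕ} {t : ℕ} {c : Fin t → ℕ} :
    c ∈ injectiveTuples S t ↔ (∀ l, c l ∈ S) ∧ Function.Injective c := by
  simp [injectiveTuples]

lemma card_injectiveTuples_le (S : Finset ℕ) (t : ℕ) :
    (injectiveTuples S t).card ≤ S.card ^ t :=
  (card_filter_le _ _).trans (by simp)

lemma sum_pow_le_of_injectiveTuples {S : Finset ℕ} (hS : S.Nonempty) {f : ℕ → ℝ}
    (hf : ∀ i, 0 ≤ f i) (t n : ℕ) {G : (Fin t → ℕ) → ℝ} (hG : ∀ c, 0 ≤ G c)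
    (h : ∀ c, (∀ l, ∑ j ∈ S, f j ≤ (S.card : ℝ) ^ 2 * f (c l)) → (∑ j ∈ S, f j) ^ n ≤ G c) :
    (∑ j ∈ S, f j) ^ n ≤ (t : ℝ) ^ n * ∑ i ∈ S, f i ^ n + ∑ c ∈ injectiveTuples S t, G c := by
  have h0 : 0 ≤ ∑ j ∈ S, f j := sum_nonneg fun i _ => hf i
  rcases exists_le_mul_or_exists_injective hS hf t with ⟨i, hi, hle⟩ | ⟨c, hc, hcS, hle⟩
  · refine (pow_le_pow_left₀ h0 hle n).trans ?_
    rw [mul_pow]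
    refine le_add_of_le_of_nonneg (mul_le_mul_of_nonneg_left ?_ (by positivity))
      (sum_nonneg fun c _ => hG c)
    exact single_le_sum (f := fun i => f i ^ n) (fun i _ => pow_nonneg (hf i) n) hi
  · refine (h c hle).trans (le_add_of_nonneg_of_le
      (mul_nonneg (by positivity) (sum_nonneg fun i _ => pow_nonneg (hf i) n)) ?_)
    exact single_le_sum (f := G) (fun c _ => hG c) (mem_injectiveTuples.2 ⟨hcS, hc⟩)

end Tools

section Model

variable {p k s M R q : ℕ} {Ω : Type} [Fintype Ω] {F : ℕ → ℕ → Ω → ℝ}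

lemma refinements_nonempty (hp : 0 < p) {a b : ℕ} (hab : a ≤ b) (ξ : ℕ) :
    (refinements p a b ξ).Nonempty :=
  ⟨ξ % p ^ b, mem_residueClass.2 ⟨Nat.mod_lt _ (pow_pos hp b),
    (Nat.mod_modEq _ _).of_dvd (pow_dvd_pow p hab)⟩⟩

lemma modEq_of_mem_refinements {a b ξ ζ : ℕ} (h : ζ ∈ refinements p a b ξ) :
    ζ ≡ ξ [MOD p ^ a] :=
  (mem_residueClass.1 h).2

lemma eq_of_mem_refinements_of_modEq {a b ξ ζ ζ' : ℕ} (h : ζ ∈ refinements p a b ξ)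
    (h' : ζ' ∈ refinements p a b ξ) (hζ : ζ ≡ ζ' [MOD p ^ b]) : ζ = ζ' :=
  hζ.eq_of_lt_of_lt (mem_residueClass.1 h).1 (mem_residueClass.1 h').1

lemma isTransversal_of_mem_injectiveTuples {b η : ℕ} {c : Fin R → ℕ}
    (hc : c ∈ injectiveTuples (refinements p b (b + 1) η) R) : IsTransversal p b c := by
  obtain ⟨h1, h2⟩ := mem_injectiveTuples.1 hc
  refine fun i j => ⟨(modEq_of_mem_refinements (h1 i)).trans (modEq_of_mem_refinements (h1 j)).symm,
    fun hij h => hij (h2 (eq_of_mem_refinements_of_modEq (h1 i) (h1 j) h))⟩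

lemma card_refinements_succ_le (hp : 0 < p) (b η : ℕ) :
    ((refinements p b (b + 1) η).card : ℝ) ≤ p := by
  have := card_refinements_le hp (Nat.le_add_right b 1) η
  rw [Nat.add_sub_cancel_left, pow_one] at this
  exact_mod_cast this

lemma card_injectiveTuples_refinements_le (hp : 0 < p) (b η t : ℕ) :
    ((injectiveTuples (refinements p b (b + 1) η) t).card : ℝ) ≤ (p : ℝ) ^ t := by
  refine le_trans ?_ (pow_le_pow_left₀ (by positivity) (card_refinements_succ_le hp b η) t)
  exact_mod_cast card_injectiveTuples_le _ _

lemma IsExpSumModel.pow_le (h : IsExpSumModel p k s M F) (hp : 0 < p) (b η : ℕ) (ω : Ω) :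
    F b η ω ^ (2 * (R * q)) ≤
      (R : ℝ) ^ (2 * (R * q)) *
          ∑ i ∈ refinements p b (b + 1) η, F (b + 1) i ω ^ (2 * (R * q)) +
        ∑ c ∈ injectiveTuples (refinements p b (b + 1) η) R,
          (p : ℝ) ^ (4 * (R * q)) * (∏ l, F (b + 1) (c l) ω ^ 2) ^ q := by
  refine (pow_le_pow_left₀ (h.nonneg _ _ _) (h.le_sum b (b + 1) η ω (Nat.le_add_right b 1)) _).trans ?_
  have hcard := card_refinements_succ_le hp b η
  refine sum_pow_le_of_injectiveTuples (refinements_nonempty hp (Nat.le_add_right b 1) η)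
    (f := fun i => F (b + 1) i ω) (fun i => h.nonneg _ _ _) R (2 * (R * q))
    (fun c => mul_nonneg (by positivity) (pow_nonneg (prod_nonneg fun l _ => sq_nonneg _) q)) ?_
  intro c hc
  set Z := ∑ j ∈ refinements p b (b + 1) η, F (b + 1) j ω
  have h0 : 0 ≤ Z := sum_nonneg fun i _ => h.nonneg _ _ _
  have h1 : ∀ l, Z ≤ (p : ℝ) ^ 2 * F (b + 1) (c l) ω := fun l =>
    (hc l).trans (mul_le_mul_of_nonneg_right (pow_le_pow_left₀ (by positivity) hcard 2)
      (h.nonneg _ _ _))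
  calc Z ^ (2 * (R * q)) = (∏ _l : Fin R, Z ^ 2) ^ q := by
        simp only [prod_const, card_univ, Fintype.card_fin]; ring
    _ ≤ (∏ l, ((p : ℝ) ^ 2 * F (b + 1) (c l) ω) ^ 2) ^ q := by
        refine pow_le_pow_left₀ (prod_nonneg fun l _ => sq_nonneg _) ?_ q
        exact prod_le_prod (fun l _ => sq_nonneg _) fun l _ => pow_le_pow_left₀ h0 (h1 l) 2
    _ = _ := by
        simp only [mul_pow, prod_mul_distrib, prod_const, card_univ, Fintype.card_fin]; ring

lemma expect_mul_le_sum {κ κ' : Type*} {A : Finset κ} {B : Finset κ'} {T G : Ω → ℝ}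
    {f : κ → Ω → ℝ} {g : κ' → Ω → ℝ} {c c' : ℝ} (hT : ∀ ω, 0 ≤ T ω)
    (h : ∀ ω, G ω ≤ c * ∑ i ∈ A, f i ω + ∑ i ∈ B, c' * g i ω) :
    𝔼 ω, T ω * G ω ≤ c * ∑ i ∈ A, 𝔼 ω, T ω * f i ω + c' * ∑ i ∈ B, 𝔼 ω, T ω * g i ω := by
  rw [← expect_sum_comm, ← expect_sum_comm, mul_expect, mul_expect, ← expect_add_distrib]
  refine expect_le_expect fun ω _ => (mul_le_mul_of_nonneg_left (h ω) (hT ω)).trans_eq ?_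
  simp only [← mul_sum]
  ring

lemma IsExpSumModel.expect_mul_pow_le (h : IsExpSumModel p k s M F) (hp : 0 < p) (b η : ℕ)
    {T : Ω → ℝ} (hT : ∀ ω, 0 ≤ T ω) {u v : ℝ} (hu0 : 0 ≤ u) (hv0 : 0 ≤ v)
    (hu : ∀ i ∈ refinements p b (b + 1) η, 𝔼 ω, T ω * F (b + 1) i ω ^ (2 * (R * q)) ≤ u)
    (hv : ∀ c ∈ injectiveTuples (refinements p b (b + 1) η) R,
      𝔼 ω, T ω * (∏ l, F (b + 1) (c l) ω ^ 2) ^ q ≤ v) :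
    𝔼 ω, T ω * F b η ω ^ (2 * (R * q)) ≤
      (R : ℝ) ^ (2 * (R * q)) * (p * u) + (p : ℝ) ^ (4 * (R * q)) * ((p : ℝ) ^ R * v) := by
  refine (expect_mul_le_sum hT (h.pow_le hp b η)).trans ?_
  gcongr
  · refine (sum_le_card_nsmul _ _ _ hu).trans ?_
    rw [nsmul_eq_mul]
    exact mul_le_mul_of_nonneg_right (card_refinements_succ_le hp b η) hu0
  · refine (sum_le_card_nsmul _ _ _ hv).trans ?_
    rw [nsmul_eq_mul]
    exact mul_le_mul_of_nonneg_right (card_injectiveTuples_refinements_le hp b η R) hv0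

end Model

/-- The diagonal-type bound `J(p ^ m) ≪ p ^ (m E)` for the Vinogradov system of degree `R + q` in
`2 R (q + 1)` variables. -/
def CountBound (p R q : ℕ) (E : ℝ) : Prop :=
  ∃ C : ℝ, 0 < C ∧ ∀ m : ℕ,
    (vinogradovCount p (R + q) (R * (q + 1)) m : ℝ) ≤ C * (p : ℝ) ^ ((m : ℝ) * E)

/-- Mixed moments over a transversal tuple of classes modulo `p ^ (a + 1)` and a class modulo
`p ^ b` beat the bound coming from Hölder's inequality by a factor `p ^ (c b)`, as long as
`K * b ≤ M`. -/
def MixedBound (p R q : ℕ) (E c : ℝ) (K : ℕ) : Prop :=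
  ∃ D : ℝ, 0 < D ∧ ∀ (M : ℕ) (Ω : Type) [Fintype Ω] (F : ℕ → ℕ → Ω → ℝ),
    IsExpSumModel p (R + q) (R * (q + 1)) M F → ∀ (a b η : ℕ) (ξ : Fin R → ℕ),
      1 ≤ b → q * a ≤ b → K * b ≤ M → IsTransversal p a ξ → (∀ i, ¬ ξ i ≡ η [MOD p]) →
        𝔼 ω, (∏ i, F (a + 1) (ξ i) ω ^ 2) * F b η ω ^ (2 * (R * q)) ≤
          D * (p : ℝ) ^ ((M : ℝ) * E - R * a - R * q * b - c * b)

lemma rpow_mul_rpow_le_of_le {P C f g x y θ : ℝ} (hP : 0 < P) (hC : 0 < C) (hf0 : 0 ≤ f)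
    (hg0 : 0 ≤ g) (hf : f ≤ C * P ^ x) (hg : g ≤ C * P ^ y) (h0 : 0 ≤ θ) (h1 : θ ≤ 1) :
    f ^ θ * g ^ (1 - θ) ≤ C * P ^ (θ * x + (1 - θ) * y) := by
  have h2 : 0 ≤ 1 - θ := by linarith
  calc f ^ θ * g ^ (1 - θ) ≤ (C * P ^ x) ^ θ * (C * P ^ y) ^ (1 - θ) := by gcongr
    _ = (C ^ θ * C ^ (1 - θ)) * (P ^ (θ * x) * P ^ ((1 - θ) * y)) := by
        rw [Real.mul_rpow hC.le (by positivity), Real.mul_rpow hC.le (by positivity),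
          ← Real.rpow_mul hP.le, ← Real.rpow_mul hP.le, mul_comm x, mul_comm y]
        ring
    _ = C * P ^ (θ * x + (1 - θ) * y) := by
        rw [← Real.rpow_add hC, ← Real.rpow_add hP, add_sub_cancel, Real.rpow_one]

section Hoelder

variable {Ω : Type*} [Fintype Ω]

lemma expect_pow_mul_pow_le {R q : ℕ} (hq : 1 ≤ q) {f g : Ω → ℝ} (hf : ∀ ω, 0 ≤ f ω)
    (hg : ∀ ω, 0 ≤ g ω) :
    𝔼 ω, f ω ^ (2 * R) * g ω ^ (2 * (R * q)) ≤
      (𝔼 ω, f ω ^ (2 * (R * (q + 1)))) ^ (1 / ((q : ℝ) + 1)) *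
        (𝔼 ω, g ω ^ (2 * (R * (q + 1)))) ^ (1 - 1 / ((q : ℝ) + 1)) := by
  have hq0 : (0 : ℝ) < q := by exact_mod_cast hq
  refine le_of_eq_of_le (expect_congr rfl fun ω _ => ?_)
    (expect_rpow_mul_rpow_le (fun ω => pow_nonneg (hf ω) _) (fun ω => pow_nonneg (hg ω) _)
      (by positivity) (by rw [div_lt_one (by positivity)]; linarith))
  rw [← Real.rpow_natCast_mul (hf ω), ← Real.rpow_natCast_mul (hg ω), ← Real.rpow_natCast,
    ← Real.rpow_natCast]
  congr 2
  · push_cast; field_simp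
  · push_cast; field_simp; ring

lemma expect_mul_pow_le {q : ℕ} (hq : 2 ≤ q) {A T : Ω → ℝ} (hA : ∀ ω, 0 ≤ A ω)
    (hT : ∀ ω, 0 ≤ T ω) :
    𝔼 ω, A ω * T ω ^ q ≤ (𝔼 ω, T ω * A ω ^ q) ^ (1 / (q : ℝ)) *
      (𝔼 ω, T ω ^ (q + 1)) ^ (1 - 1 / (q : ℝ)) := by
  have hq0 : (2 : ℝ) ≤ q := by exact_mod_cast hq
  have h1 : 1 / (q : ℝ) < 1 := by rw [div_lt_one (by positivity)]; linarith
  refine le_of_eq_of_le (expect_congr rfl fun ω _ => ?_)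
    (expect_rpow_mul_rpow_le (fun ω => mul_nonneg (hT ω) (pow_nonneg (hA ω) q))
      (fun ω => pow_nonneg (hT ω) _) (by positivity) h1)
  rw [Real.mul_rpow (hT ω) (pow_nonneg (hA ω) q), ← Real.rpow_natCast_mul (hA ω),
    ← Real.rpow_natCast_mul (hT ω), mul_one_div_cancel (by positivity), Real.rpow_one,
    mul_right_comm, ← Real.rpow_add_of_nonneg (hT ω) (by positivity)
      (mul_nonneg (by positivity) (by linarith)), mul_comm, ← Real.rpow_natCast]
  congr 2
  push_cast
  field_simp
  ring

end Hoelder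

section Model

variable {p R q : ℕ} {E : ℝ}

lemma mixedBound_zero (hp : 1 < p) (hR : 1 ≤ R) (hq : 2 ≤ q) (hE : (R * (q + 1) : ℝ) ≤ E)
    (hJ : CountBound p R q E) : MixedBound p R q E 0 1 := by
  obtain ⟨C, hC, hJ⟩ := hJ
  have hP : (1 : ℝ) < p := by exact_mod_cast hp
  have hP0 : (0 : ℝ) < p := by linarith
  have hR0 : (0 : ℝ) < R := by exact_mod_cast hR
  have hq0 : (2 : ℝ) ≤ q := by exact_mod_cast hq
  refine ⟨R * C, by positivity, fun M Ω _ F h a b η ξ hb hab hbM _ _ => ?_⟩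
  have haM : a + 1 ≤ M := by nlinarith
  have hθ : 1 / ((q : ℝ) + 1) ≤ 1 := by rw [div_le_one (by positivity)]; linarith
  have key : ∀ i, 𝔼 ω, F (a + 1) (ξ i) ω ^ (2 * R) * F b η ω ^ (2 * (R * q)) ≤
      C * (p : ℝ) ^ ((M : ℝ) * E - R * a - R * q * b - 0 * b) := by
    intro i
    refine (expect_pow_mul_pow_le (by omega) (fun ω => h.nonneg _ _ _)
      (fun ω => h.nonneg _ _ _)).trans ?_
    refine (rpow_mul_rpow_le_of_le hP0 hC (expect_nonneg fun ω _ => pow_nonneg (h.nonneg _ _ _) _)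
      (expect_nonneg fun ω _ => pow_nonneg (h.nonneg _ _ _) _)
      ((h.expect_pow_le (by omega) haM (ξ i)).trans (hJ _))
      ((h.expect_pow_le (by omega) (by omega) η).trans (hJ _)) (by positivity) hθ).trans ?_
    refine mul_le_mul_of_nonneg_left (Real.rpow_le_rpow_of_exponent_le hP.le ?_) hC.le
    rw [Nat.cast_sub haM, Nat.cast_sub (by omega)]
    have h1 : 1 / ((q : ℝ) + 1) * E = R + (E - R * (q + 1)) / (q + 1) := by field_simp; ring
    have h2 : 0 ≤ (E - R * (q + 1)) / (q + 1) := div_nonneg (by linarith) (by positivity)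
    set r := (E - R * (q + 1)) / (q + 1) with hr
    set θ := 1 / ((q : ℝ) + 1) with hθ'
    have h3 : E = (q + 1) * (R + r) := by rw [hr]; field_simp; ring
    have h4 : (1 - θ) * E = q * (R + r) := by rw [sub_mul, h1, one_mul]; nth_rw 1 [h3]; ring
    have h5 : θ * (((M : ℝ) - ((a + 1 : ℕ) : ℝ)) * E) + (1 - θ) * (((M : ℝ) - b) * E) =
        M * E - (a + 1) * (R + r) - b * (q * (R + r)) := by
      rw [← h4, ← h1]; push_cast; ring
    rw [h5]
    have h6 : 0 ≤ (a : ℝ) * r + r + b * q * r := by positivity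
    nlinarith
  calc _ ≤ 𝔼 ω, ∑ i, F (a + 1) (ξ i) ω ^ (2 * R) * F b η ω ^ (2 * (R * q)) := by
        refine expect_le_expect fun ω _ => ?_
        rw [← sum_mul]
        refine mul_le_mul_of_nonneg_right ?_ (pow_nonneg (h.nonneg _ _ _) _)
        simp only [pow_mul]
        exact prod_le_sum_pow hR fun i => sq_nonneg _
    _ = ∑ i, 𝔼 ω, F (a + 1) (ξ i) ω ^ (2 * R) * F b η ω ^ (2 * (R * q)) := expect_sum_comm _ _ _
    _ ≤ _ := by
        refine (sum_le_sum fun i _ => key i).trans_eq ?_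
        simp only [sum_const, card_univ, Fintype.card_fin, nsmul_eq_mul]
        ring

lemma MixedBound.expect_transversal_mul_transversal_le [Fact p.Prime] (hp : R + q < p)
    (hR1 : 1 ≤ R) (hR : R ≤ q + 1) (hq : 2 ≤ q) {c δ : ℝ} {K : ℕ} (hK : 1 ≤ K)
    (hE : (R * (q + 1) : ℝ) ≤ E) (hδ : δ ≤ (1 - 1 / (q : ℝ)) * (E - R * (q + 1)))
    (hJ : CountBound p R q E) (hB : MixedBound p R q E c K) :
    ∃ A : ℝ, 0 < A ∧ ∀ (M : ℕ) (Ω : Type) [Fintype Ω] (F : ℕ → ℕ → Ω → ℝ),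
      IsExpSumModel p (R + q) (R * (q + 1)) M F → ∀ (a b η : ℕ) (ξ ν : Fin R → ℕ),
        1 ≤ b → q * a ≤ b → K * (q * b) ≤ M → IsTransversal p a ξ → (∀ i, ¬ ξ i ≡ η [MOD p]) →
          IsTransversal p b ν → (∀ l, ν l ≡ η [MOD p ^ b]) →
            𝔼 ω, (∏ i, F (a + 1) (ξ i) ω ^ 2) * (∏ l, F (b + 1) (ν l) ω ^ 2) ^ q ≤
              A * (p : ℝ) ^ ((M : ℝ) * E - R * a - R * q * b - (c + δ) * b) := by
  obtain ⟨C, hC, hJ⟩ := hJ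
  obtain ⟨D, hD, hB⟩ := hB
  have hp1 : 1 < p := (Fact.out : p.Prime).one_lt
  have hP : (1 : ℝ) < p := by exact_mod_cast hp1
  have hP0 : (0 : ℝ) < p := by linarith
  have hR0 : (0 : ℝ) < R := by exact_mod_cast hR1
  have hq0 : (2 : ℝ) ≤ q := by exact_mod_cast hq
  have hθ : 1 / (q : ℝ) ≤ 1 := by rw [div_le_one (by positivity)]; linarith
  set A := max D (R * C) with hA
  have hA0 : 0 < A := lt_max_of_lt_left hD
  refine ⟨R * A, by positivity, fun M Ω _ F h a b η ξ ν hb hab hKM hξ hη hν hνη => ?_⟩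
  have hqb : 2 * b ≤ q * b := Nat.mul_le_mul_right b hq
  have hqM : q * b ≤ M := (Nat.le_mul_of_pos_left _ (by omega)).trans hKM
  have haq : 2 * a ≤ q * a := Nat.mul_le_mul_right a hq
  have hcop : ∀ i l, ∀ ζ ∈ refinements p (a + 1) (q * b) (ξ i), ¬ ν l ≡ ζ [MOD p] := by
    intro i l ζ hζ hνζ
    refine hη i ?_
    have h1 : ν l ≡ η [MOD p] := (hνη l).of_dvd (dvd_pow_self p (by omega))
    have h2 : ζ ≡ ξ i [MOD p] :=
      (modEq_of_mem_refinements hζ).of_dvd (dvd_pow_self p (Nat.succ_ne_zero a))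
    exact h2.symm.trans (hνζ.symm.trans h1)
  have hT : ∀ ω, 0 ≤ ∏ l, F (b + 1) (ν l) ω ^ 2 := fun ω => prod_nonneg fun l _ => sq_nonneg _
  have hpow : 𝔼 ω, (∏ l, F (b + 1) (ν l) ω ^ 2) ^ (q + 1) ≤
      A * (p : ℝ) ^ (((M - (b + 1) : ℕ) : ℝ) * E) := by
    calc _ ≤ 𝔼 ω, ∑ l, F (b + 1) (ν l) ω ^ (2 * (R * (q + 1))) := by
          refine expect_le_expect fun ω _ => ?_
          rw [← prod_pow]
          refine (prod_le_sum_pow hR1 fun l => by positivity).trans_eq ?_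
          refine sum_congr rfl fun l _ => ?_
          ring
      _ = ∑ l, 𝔼 ω, F (b + 1) (ν l) ω ^ (2 * (R * (q + 1))) := expect_sum_comm _ _ _
      _ ≤ ∑ _l : Fin R, C * (p : ℝ) ^ (((M - (b + 1) : ℕ) : ℝ) * E) :=
          sum_le_sum fun l _ => (h.expect_pow_le (by omega) (by omega) (ν l)).trans (hJ _)
      _ = R * C * (p : ℝ) ^ (((M - (b + 1) : ℕ) : ℝ) * E) := by
          simp only [sum_const, card_univ, Fintype.card_fin, nsmul_eq_mul]; ring
      _ ≤ _ := by gcongr; exact le_max_right _ _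
  set x : ℝ := 1 / (q : ℝ) * ((M : ℝ) * E - R * b - R * q * (q * b : ℕ) - c * (q * b : ℕ)) +
    (1 - 1 / (q : ℝ)) * (((M - (b + 1) : ℕ) : ℝ) * E) with hx
  have hone : ∀ i, ∀ ζ ∈ refinements p (a + 1) (q * b) (ξ i),
      𝔼 ω, F (q * b) ζ ω ^ (2 * R) * (∏ l, F (b + 1) (ν l) ω ^ 2) ^ q ≤ A * (p : ℝ) ^ x := by
    intro i ζ hζ
    refine (expect_mul_pow_le hq (fun ω => pow_nonneg (h.nonneg _ _ _) _) hT).trans ?_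
    refine rpow_mul_rpow_le_of_le hP0 hA0
      (expect_nonneg fun ω _ => mul_nonneg (hT ω) (pow_nonneg (pow_nonneg (h.nonneg _ _ _) _) _))
      (expect_nonneg fun ω _ => pow_nonneg (hT ω) _) ?_ hpow (by positivity) hθ
    simp only [← pow_mul, mul_assoc 2 R q]
    refine (hB M Ω F h b (q * b) ζ ν (by omega) le_rfl hKM hν fun l => hcop i l ζ hζ).trans ?_
    gcongr
    exact le_max_left _ _
  have htuple : ∀ ζ ∈ Fintype.piFinset fun i => refinements p (a + 1) (q * b) (ξ i),
      𝔼 ω, (∏ i, F (q * b) (ζ i) ω ^ 2) * (∏ l, F (b + 1) (ν l) ω ^ 2) ^ q ≤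
        R * (A * (p : ℝ) ^ x) := by
    intro ζ hζ
    calc _ ≤ 𝔼 ω, ∑ i, F (q * b) (ζ i) ω ^ (2 * R) * (∏ l, F (b + 1) (ν l) ω ^ 2) ^ q := by
          refine expect_le_expect fun ω _ => ?_
          rw [← sum_mul]
          refine mul_le_mul_of_nonneg_right ?_ (pow_nonneg (hT ω) _)
          simp only [pow_mul]
          exact prod_le_sum_pow hR1 fun i => sq_nonneg _
      _ = ∑ i, 𝔼 ω, F (q * b) (ζ i) ω ^ (2 * R) * (∏ l, F (b + 1) (ν l) ω ^ 2) ^ q :=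
          expect_sum_comm _ _ _
      _ ≤ _ := by
          refine (sum_le_sum fun i _ => hone i _ (Fintype.mem_piFinset.1 hζ i)).trans_eq ?_
          simp only [sum_const, card_univ, Fintype.card_fin, nsmul_eq_mul]
  have hcard : ((Fintype.piFinset fun i => refinements p (a + 1) (q * b) (ξ i)).card : ℝ) ≤
      (p : ℝ) ^ ((((q * b - (a + 1)) * R : ℕ)) : ℝ) := by
    rw [Real.rpow_natCast, Fintype.card_piFinset, pow_mul]
    have h1 : ∏ i, (refinements p (a + 1) (q * b) (ξ i)).card ≤
        ∏ _i : Fin R, p ^ (q * b - (a + 1)) :=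
      prod_le_prod' fun i _ => card_refinements_le (by omega) (by omega) _
    rw [prod_const, card_univ, Fintype.card_fin] at h1
    exact_mod_cast h1
  refine (h.expect_transversal_le hp hR hq hb hab hξ hη hνη).trans ?_
  refine (sum_le_card_nsmul _ _ _ htuple).trans ?_
  rw [nsmul_eq_mul]
  calc _ ≤ (p : ℝ) ^ ((((q * b - (a + 1)) * R : ℕ)) : ℝ) * (R * (A * (p : ℝ) ^ x)) := by gcongr
    _ = R * A * (p : ℝ) ^ ((((q * b - (a + 1)) * R : ℕ)) + x) := by
        rw [Real.rpow_add hP0 _ x]; ring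
    _ ≤ _ := by
        refine mul_le_mul_of_nonneg_left (Real.rpow_le_rpow_of_exponent_le hP.le ?_) (by positivity)
        rw [hx, Nat.cast_mul, Nat.cast_sub (by omega), Nat.cast_sub (by omega)]
        push_cast
        set θ := 1 / (q : ℝ) with hθd
        have hθq : θ * q = 1 := by rw [hθd]; field_simp
        obtain ⟨Λ, rfl⟩ : ∃ Λ, E = R * (q + 1) + Λ := ⟨E - R * (q + 1), by ring⟩
        have hΛ : 0 ≤ Λ := by linarith
        have h1 : (1 - θ) * (R * (q + 1) + Λ) = R * q - θ * R + (1 - θ) * Λ := by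
          linear_combination (-R : ℝ) * hθq
        have h2 : 0 ≤ (1 - θ) * (R * (q + 1) + Λ) := mul_nonneg (by linarith) (by positivity)
        have h3 : δ * b ≤ (1 - θ) * Λ * b := by
          refine mul_le_mul_of_nonneg_right ?_ (by positivity)
          simpa using hδ
        have h4 : (q * b - (a + 1)) * R + (θ * (M * (R * (q + 1) + Λ) - R * b - R * q * (q * b) -
            c * (q * b)) + (1 - θ) * ((M - (b + 1)) * (R * (q + 1) + Λ))) =
            M * (R * (q + 1) + Λ) - R * a - R - θ * R * b - c * b
            - b * ((1 - θ) * (R * (q + 1) + Λ)) - (1 - θ) * (R * (q + 1) + Λ) := by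
          linear_combination (- R * q * b - c * b : ℝ) * hθq
        rw [h4, h1] at *
        nlinarith

lemma MixedBound.gain [Fact p.Prime] (hp : R + q < p) (hpR : 2 * R ^ (2 * (R * q)) ≤ p)
    (hR2 : 2 ≤ R) (hR : R ≤ q + 1) (hq : 2 ≤ q) {c c' δ : ℝ} {K N : ℕ} (hK : 1 ≤ K)
    (hE : (R * (q + 1) : ℝ) ≤ E) (hδ : δ ≤ (1 - 1 / (q : ℝ)) * (E - R * (q + 1)))
    (hc0 : 0 ≤ c') (hc : c' ≤ c + δ) (hcN : c' ≤ N)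
    (hJ : CountBound p R q E) (hB : MixedBound p R q E c K) :
    MixedBound p R q E c' (K * (q * (1 + N))) := by
  have hp1 : 1 < p := (Fact.out : p.Prime).one_lt
  obtain ⟨A, hA, hV⟩ := hB.expect_transversal_mul_transversal_le hp (by omega) hR hq hK hE hδ hJ
  obtain ⟨D, hD, hU⟩ := mixedBound_zero hp1 (by omega) hq hE hJ
  have hP : (1 : ℝ) < p := by exact_mod_cast hp1
  have hP0 : (0 : ℝ) < p := by linarith
  have hR0 : (2 : ℝ) ≤ R := by exact_mod_cast hR2
  have hq0 : (2 : ℝ) ≤ q := by exact_mod_cast hq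
  have hRq : (4 : ℝ) ≤ R * q := by nlinarith
  have hpR' : 2 * (R : ℝ) ^ (2 * (R * q)) ≤ p := by exact_mod_cast hpR
  set B := max D (2 * ((p : ℝ) ^ (4 * (R * q)) * (p : ℝ) ^ R * A)) with hBdef
  have hB0 : 0 < B := lt_max_of_lt_left hD
  refine ⟨B, hB0, fun M Ω _ F h a b η ξ hb hab hKM hξ hη => ?_⟩
  have hbM : (1 + N) * b ≤ M := by
    refine le_trans ?_ hKM
    rw [← mul_assoc K]
    exact Nat.mul_le_mul_right b (Nat.le_mul_of_pos_left _ (Nat.mul_pos (by omega) (by omega)))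
  have key : ∀ d b' : ℕ, b' + d = (1 + N) * b → b ≤ b' → ∀ η', (∀ i, ¬ ξ i ≡ η' [MOD p]) →
      𝔼 ω, (∏ i, F (a + 1) (ξ i) ω ^ 2) * F b' η' ω ^ (2 * (R * q)) ≤
        B * (p : ℝ) ^ ((M : ℝ) * E - R * a - R * q * b - c' * b - 2 * ((b' : ℝ) - b)) := by
    intro d
    induction d with
    | zero =>
      intro b' hb' hbb' η' hη'
      rw [add_zero] at hb'
      refine (hU M Ω F h a b' η' ξ (by omega) (by omega) (by omega) hξ hη').trans ?_
      refine mul_le_mul (le_max_left _ _) (Real.rpow_le_rpow_of_exponent_le hP.le ?_)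
        (by positivity) hB0.le
      have h1 : (b' : ℝ) = (1 + N) * b := by rw [hb']; push_cast; ring
      rw [h1]
      have hb0 : (0 : ℝ) ≤ b := by positivity
      have hN0 : (0 : ℝ) ≤ (N : ℝ) * b := by positivity
      have h2 : c' * b ≤ N * b := mul_le_mul_of_nonneg_right hcN hb0
      nlinarith [mul_le_mul_of_nonneg_right hRq hN0]
    | succ d ih =>
      intro b' hb' hbb' η' hη'
      have hb'le : b' ≤ (1 + N) * b := by omega
      set y := (M : ℝ) * E - R * a - R * q * b - c' * b - 2 * ((b' : ℝ) - b) with hy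
      have hKM' : K * (q * b') ≤ M := by
        refine le_trans (Nat.mul_le_mul_left K (Nat.mul_le_mul_left q hb'le)) ?_
        rwa [← mul_assoc q, ← mul_assoc K]
      have hstep := h.expect_mul_pow_le (R := R) (q := q) (by omega) b' η'
        (T := fun ω => ∏ i, F (a + 1) (ξ i) ω ^ 2)
        (u := B * (p : ℝ) ^ (y - 2)) (v := A * (p : ℝ) ^ y)
        (fun ω => prod_nonneg fun i _ => sq_nonneg _) (by positivity) (by positivity) ?_ ?_
      · refine hstep.trans ?_
        have h1 : (p : ℝ) ^ (y - 2) = (p : ℝ) ^ y / (p : ℝ) ^ 2 := by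
          rw [Real.rpow_sub hP0]; norm_num
        rw [h1]
        have h2 : (p : ℝ) ^ (4 * (R * q)) * (p : ℝ) ^ R * A ≤ B / 2 := by
          have := le_max_right D (2 * ((p : ℝ) ^ (4 * (R * q)) * (p : ℝ) ^ R * A))
          linarith
        have h3 : (R : ℝ) ^ (2 * (R * q)) * (p * (B * ((p : ℝ) ^ y / (p : ℝ) ^ 2))) =
            (2 * (R : ℝ) ^ (2 * (R * q)) / p) * (B / 2 * (p : ℝ) ^ y) := by
          field_simp
        have h4 : 2 * (R : ℝ) ^ (2 * (R * q)) / p ≤ 1 := by rwa [div_le_one hP0]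
        have h5 : 0 ≤ B / 2 * (p : ℝ) ^ y := by positivity
        have h6 : 0 ≤ (p : ℝ) ^ y := by positivity
        rw [h3]
        nlinarith [mul_le_mul_of_nonneg_right h4 h5, mul_le_mul_of_nonneg_right h2 h6]
      · intro i hi
        refine (ih (b' + 1) (by omega) (by omega) i fun l hl => hη' l (hl.trans ?_)).trans_eq ?_
        · exact (modEq_of_mem_refinements hi).of_dvd (dvd_pow_self p (by omega))
        · rw [hy]; push_cast; ring_nf
      · intro ν hν
        refine (hV M Ω F h a b' η' ξ ν (by omega) (by omega) hKM' hξ hη'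
          (isTransversal_of_mem_injectiveTuples hν)
          fun l => modEq_of_mem_refinements ((mem_injectiveTuples.1 hν).1 l)).trans ?_
        refine mul_le_mul_of_nonneg_left (Real.rpow_le_rpow_of_exponent_le hP.le ?_) hA.le
        have h1 : (b : ℝ) ≤ b' := by exact_mod_cast hbb'
        have h2 : c' * b ≤ (c + δ) * b' := mul_le_mul hc h1 (by positivity) (by linarith)
        rw [hy]
        nlinarith [mul_le_mul_of_nonneg_right hRq (sub_nonneg.2 h1)]
  have := key (N * b) b (by ring) le_rfl η hη
  simpa using this

lemma exists_mixedBound [Fact p.Prime] (hp : R + q < p) (hpR : 2 * R ^ (2 * (R * q)) ≤ p)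
    (hR2 : 2 ≤ R) (hR : R ≤ q + 1) (hq : 2 ≤ q) {Λ : ℝ} (hΛ : 0 < Λ) (N : ℕ) :
    ∃ K : ℕ, 1 ≤ K ∧ ∀ E : ℝ, R * (q + 1) + Λ ≤ E → CountBound p R q E →
      MixedBound p R q E N K := by
  have hq0 : (2 : ℝ) ≤ q := by exact_mod_cast hq
  have hθ : 0 < 1 - 1 / (q : ℝ) := by
    rw [sub_pos, div_lt_one (by positivity)]; linarith
  set δ := (1 - 1 / (q : ℝ)) * Λ with hδ
  have hδ0 : 0 < δ := mul_pos hθ hΛ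
  have key : ∀ n : ℕ, ∃ K : ℕ, 1 ≤ K ∧ ∀ E : ℝ, R * (q + 1) + Λ ≤ E → CountBound p R q E →
      MixedBound p R q E (min (n * δ) N) K := by
    intro n
    induction n with
    | zero =>
      refine ⟨1, le_rfl, fun E hE hJ => ?_⟩
      have := mixedBound_zero (Fact.out : p.Prime).one_lt (by omega) hq (by linarith) hJ
      simpa using this
    | succ n ih =>
      obtain ⟨K, hK, ih⟩ := ih
      refine ⟨K * (q * (1 + N)), Nat.mul_pos hK (Nat.mul_pos (by omega) (by omega)),
        fun E hE hJ => ?_⟩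
      refine (ih E hE hJ).gain hp hpR hR2 hR hq hK (by linarith) (δ := δ) ?_
        (by positivity) ?_ (min_le_right _ _) hJ
      · exact mul_le_mul_of_nonneg_left (by linarith) hθ.le
      · rw [min_add]
        refine min_le_min (by push_cast; linarith) (by linarith)
  obtain ⟨n, hn⟩ := exists_nat_ge ((N : ℝ) / δ)
  obtain ⟨K, hK, h⟩ := key n
  refine ⟨K, hK, fun E hE hJ => ?_⟩
  have h1 : min ((n : ℝ) * δ) N = N := min_eq_right (by rwa [div_le_iff₀ hδ0] at hn)
  rw [← h1]
  exact h E hE hJ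

end Model

lemma sum_pow_le_card_pow_mul_sum_pow {S : Finset ℕ} (hS : S.Nonempty) {f : ℕ → ℝ}
    (hf : ∀ i, 0 ≤ f i) (n : ℕ) :
    (∑ i ∈ S, f i) ^ n ≤ (S.card : ℝ) ^ n * ∑ i ∈ S, f i ^ n := by
  obtain ⟨m, hmS, hm⟩ := exists_max_image S f hS
  have hle : ∑ j ∈ S, f j ≤ S.card * f m := by
    simpa using sum_le_card_nsmul S f (f m) hm
  refine (pow_le_pow_left₀ (sum_nonneg fun i _ => hf i) hle n).trans ?_
  rw [mul_pow]
  refine mul_le_mul_of_nonneg_left ?_ (by positivity)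
  exact single_le_sum (f := fun i => f i ^ n) (fun i _ => pow_nonneg (hf i) n) hmS

section Model

variable {p k s M R q : ℕ} {Ω : Type} [Fintype Ω] {F : ℕ → ℕ → Ω → ℝ} {E : ℝ}

lemma IsExpSumModel.expect_pow_zero (h : IsExpSumModel p k s M F) :
    𝔼 ω, F 0 0 ω ^ (2 * s) = (vinogradovCount p k s M : ℝ) := by
  have h1 := h.expect_prod (Fin s) (by simp) (fun _ => 0) (fun _ => 0)
  simp only [prod_const, card_univ, Fintype.card_fin, ← pow_mul] at h1
  have h2 : residueClass p M 0 0 = range (p ^ M) := by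
    ext x
    simp [mem_residueClass, Nat.modEq_one]
  rw [h1, vinogradovCount, h2]

lemma IsExpSumModel.pow_zero_le (h : IsExpSumModel p k s M F) (hp : 0 < p) (ω : Ω) :
    F 0 0 ω ^ (2 * (R * (q + 1))) ≤
      ((R + 1 : ℕ) : ℝ) ^ (2 * (R * (q + 1))) *
          ∑ i ∈ refinements p 0 1 0, F 1 i ω ^ (2 * (R * (q + 1))) +
        ∑ c ∈ injectiveTuples (refinements p 0 1 0) (R + 1),
          (p : ℝ) ^ (4 * (R * (q + 1))) * ((∏ i : Fin R, F 1 (c i.castSucc) ω ^ 2) *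
            F 1 (c (Fin.last R)) ω ^ (2 * (R * q))) := by
  refine (pow_le_pow_left₀ (h.nonneg _ _ _) (h.le_sum 0 1 0 ω (by omega)) _).trans ?_
  have hcard := card_refinements_succ_le hp 0 0
  refine sum_pow_le_of_injectiveTuples (refinements_nonempty hp (by omega) 0)
    (f := fun i => F 1 i ω) (fun i => h.nonneg _ _ _) (R + 1) (2 * (R * (q + 1)))
    (fun c => mul_nonneg (by positivity) (mul_nonneg (prod_nonneg fun l _ => sq_nonneg _)
      (pow_nonneg (h.nonneg _ _ _) _))) ?_
  intro c hc
  set Z := ∑ j ∈ refinements p 0 1 0, F 1 j ω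
  have h0 : 0 ≤ Z := sum_nonneg fun i _ => h.nonneg _ _ _
  have h1 : ∀ l, Z ≤ (p : ℝ) ^ 2 * F 1 (c l) ω := fun l =>
    (hc l).trans (mul_le_mul_of_nonneg_right (pow_le_pow_left₀ (by positivity) hcard 2)
      (h.nonneg _ _ _))
  calc Z ^ (2 * (R * (q + 1))) = (∏ _i : Fin R, Z ^ 2) * Z ^ (2 * (R * q)) := by
        simp only [prod_const, card_univ, Fintype.card_fin]; ring
    _ ≤ (∏ i : Fin R, ((p : ℝ) ^ 2 * F 1 (c i.castSucc) ω) ^ 2) *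
        ((p : ℝ) ^ 2 * F 1 (c (Fin.last R)) ω) ^ (2 * (R * q)) := by
        refine mul_le_mul ?_ (pow_le_pow_left₀ h0 (h1 _) _) (by positivity)
          (prod_nonneg fun l _ => sq_nonneg _)
        exact prod_le_prod (fun l _ => sq_nonneg _) fun l _ => pow_le_pow_left₀ h0 (h1 _) 2
    _ = _ := by
        simp only [mul_pow, prod_mul_distrib, prod_const, card_univ, Fintype.card_fin]; ring

lemma IsExpSumModel.expect_mul_pow_one_le (h : IsExpSumModel p k s M F) (hp : 0 < p) {b : ℕ}
    (hb : 1 ≤ b) (η n : ℕ) {T : Ω → ℝ} (hT : ∀ ω, 0 ≤ T ω) {u : ℝ} (hu0 : 0 ≤ u)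
    (hu : ∀ ζ ∈ refinements p 1 b η, 𝔼 ω, T ω * F b ζ ω ^ n ≤ u) :
    𝔼 ω, T ω * F 1 η ω ^ n ≤ (p : ℝ) ^ (b * n) * ((p : ℝ) ^ b * u) := by
  have hP : (1 : ℝ) ≤ p := by exact_mod_cast hp
  have hcard : ((refinements p 1 b η).card : ℝ) ≤ (p : ℝ) ^ b := by
    refine le_trans ?_ (pow_le_pow_right₀ hP (Nat.sub_le b 1))
    exact_mod_cast card_refinements_le hp hb η
  have h1 : ∀ ω, F 1 η ω ^ n ≤ (p : ℝ) ^ (b * n) * ∑ ζ ∈ refinements p 1 b η, F b ζ ω ^ n := by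
    intro ω
    refine (pow_le_pow_left₀ (h.nonneg _ _ _) (h.le_sum 1 b η ω hb) n).trans ?_
    refine (sum_pow_le_card_pow_mul_sum_pow (refinements_nonempty hp hb η)
      (f := fun i => F b i ω) (fun i => h.nonneg _ _ _) n).trans ?_
    rw [pow_mul]
    refine mul_le_mul_of_nonneg_right (pow_le_pow_left₀ (by positivity) hcard n) ?_
    exact sum_nonneg fun i _ => pow_nonneg (h.nonneg _ _ _) n
  have h2 : 𝔼 ω, T ω * F 1 η ω ^ n ≤
      (p : ℝ) ^ (b * n) * ∑ ζ ∈ refinements p 1 b η, 𝔼 ω, T ω * F b ζ ω ^ n := by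
    rw [← expect_sum_comm, mul_expect]
    refine expect_le_expect fun ω _ => (mul_le_mul_of_nonneg_left (h1 ω) (hT ω)).trans_eq ?_
    rw [← mul_sum]
    ring
  refine h2.trans ?_
  gcongr
  refine (sum_le_card_nsmul _ _ _ hu).trans ?_
  rw [nsmul_eq_mul]
  exact mul_le_mul_of_nonneg_right hcard hu0

lemma MixedBound.vinogradovCount_le (hp : 1 < p) {K : ℕ}
    (hB : MixedBound p R q E ((R * q + 2 : ℕ) : ℝ) K) :
    ∃ D : ℝ, 0 < D ∧ ∀ M b : ℕ, 1 ≤ b → 1 ≤ M → K * b ≤ M →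
      (vinogradovCount p (R + q) (R * (q + 1)) M : ℝ) ≤
        ((R + 1 : ℕ) : ℝ) ^ (2 * (R * (q + 1))) *
          (p * vinogradovCount p (R + q) (R * (q + 1)) (M - 1)) +
        D * (p : ℝ) ^ ((M : ℝ) * E - b) := by
  obtain ⟨D, hD, hB⟩ := hB
  have hP : (1 : ℝ) < p := by exact_mod_cast hp
  have hP0 : (0 : ℝ) < p := by linarith
  refine ⟨(p : ℝ) ^ (4 * (R * (q + 1))) * ((p : ℝ) ^ (R + 1) * D), by positivity,
    fun M b hb hM hKb => ?_⟩
  obtain ⟨Ω, _, _, F, h⟩ := exists_isExpSumModel (p := p) (by omega) (R + q) (R * (q + 1)) M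
  have hmixed : ∀ c ∈ injectiveTuples (refinements p 0 1 0) (R + 1),
      𝔼 ω, 1 * ((∏ i : Fin R, F 1 (c i.castSucc) ω ^ 2) *
        F 1 (c (Fin.last R)) ω ^ (2 * (R * q))) ≤ D * (p : ℝ) ^ ((M : ℝ) * E - b) := by
    intro c hc
    have hct := isTransversal_of_mem_injectiveTuples (b := 0) hc
    have hξ : IsTransversal p 0 fun i : Fin R => c i.castSucc := fun i j =>
      ⟨(hct _ _).1, fun hij => (hct _ _).2 fun h => hij (Fin.castSucc_injective R h)⟩
    have hη : ∀ i : Fin R, ¬ c i.castSucc ≡ c (Fin.last R) [MOD p] := fun i => by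
      simpa using (hct i.castSucc (Fin.last R)).2 (Fin.castSucc_lt_last i).ne
    simp only [one_mul]
    refine (h.expect_mul_pow_one_le (by omega) hb _ _
      (T := fun ω => ∏ i : Fin R, F 1 (c i.castSucc) ω ^ 2)
      (u := D * (p : ℝ) ^ ((M : ℝ) * E - R * (0 : ℕ) - R * q * b - ((R * q + 2 : ℕ) : ℝ) * b))
      (fun ω => prod_nonneg fun i _ => sq_nonneg _) (by positivity) ?_).trans_eq ?_
    · intro ζ hζ
      refine hB M Ω F h 0 b ζ _ hb (by omega) hKb hξ fun i hi => hη i (hi.trans ?_)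
      simpa using modEq_of_mem_refinements hζ
    · rw [← Real.rpow_natCast, ← Real.rpow_natCast, mul_left_comm _ D, mul_left_comm _ D,
        ← Real.rpow_add hP0, ← Real.rpow_add hP0]
      congr 2
      push_cast
      ring
  rw [← h.expect_pow_zero]
  have h1 := expect_mul_le_sum (T := fun _ => (1 : ℝ)) (fun _ => zero_le_one)
    (h.pow_zero_le (R := R) (q := q) (by omega))
  simp only [one_mul] at h1 hmixed
  refine h1.trans ?_
  rw [mul_assoc ((p : ℝ) ^ (4 * (R * (q + 1)))), mul_assoc ((p : ℝ) ^ (R + 1))]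
  gcongr
  · refine (sum_le_card_nsmul _ _ _ fun i _ => h.expect_pow_le (by omega) hM i).trans ?_
    rw [nsmul_eq_mul]
    exact mul_le_mul_of_nonneg_right (card_refinements_succ_le (by omega) 0 0) (by positivity)
  · refine (sum_le_card_nsmul _ _ _ hmixed).trans ?_
    rw [nsmul_eq_mul]
    exact mul_le_mul_of_nonneg_right
      (card_injectiveTuples_refinements_le (by omega) 0 0 (R + 1)) (by positivity)

lemma exists_countBound_sub [Fact p.Prime] (hp : R + q < p)
    (hpR : 2 * (R + 1) ^ (2 * (R * (q + 1))) ≤ p)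
    (hR2 : 2 ≤ R) (hR : R ≤ q + 1) (hq : 2 ≤ q) {Λ : ℝ} (hΛ : 0 < Λ) :
    ∃ σ : ℝ, 0 < σ ∧ ∀ E : ℝ, R * (q + 1) + Λ ≤ E → CountBound p R q E →
      CountBound p R q (E - σ) := by
  have hp1 : 1 < p := (Fact.out : p.Prime).one_lt
  have hpR' : 2 * R ^ (2 * (R * q)) ≤ p := by
    refine le_trans (Nat.mul_le_mul_left 2 ?_) hpR
    exact (Nat.pow_le_pow_left (Nat.le_succ R) _).trans
      (Nat.pow_le_pow_right (by omega) (by gcongr; omega))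
  obtain ⟨K, hK, hKB⟩ := exists_mixedBound hp hpR' hR2 hR hq hΛ (R * q + 2)
  have hK0 : (1 : ℝ) ≤ K := by exact_mod_cast hK
  have hP : (1 : ℝ) < p := by exact_mod_cast hp1
  have hP0 : (0 : ℝ) < p := by linarith
  have hR0 : (2 : ℝ) ≤ R := by exact_mod_cast hR2
  have hq0 : (2 : ℝ) ≤ q := by exact_mod_cast hq
  refine ⟨1 / K, by positivity, fun E hE hJ => ?_⟩
  obtain ⟨D, hD, hrec⟩ := (hKB E hE hJ).vinogradovCount_le hp1
  obtain ⟨C, hC, hJ⟩ := hJ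
  set σ : ℝ := 1 / K with hσ
  have hσ1 : σ ≤ 1 := by rw [hσ, div_le_one (by positivity)]; exact hK0
  have hσK : σ * K = 1 := by rw [hσ]; field_simp
  have hσ0 : 0 < σ := by positivity
  set A := max (C * p) (2 * (D * p)) with hA
  have hA0 : 0 < A := lt_max_of_lt_left (by positivity)
  refine ⟨A, hA0, fun m => ?_⟩
  induction m with
  | zero =>
    refine (hJ 0).trans ?_
    have : C * 1 ≤ C * p := by gcongr
    have h2 := le_max_left (C * p) (2 * (D * p))
    simp only [Nat.cast_zero, zero_mul, Real.rpow_zero, mul_one] at this ⊢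
    exact this.trans h2
  | succ n ih =>
    rcases lt_or_ge (n + 1) K with hlt | hge
    · refine (hJ _).trans ?_
      have h1 : ((n + 1 : ℕ) : ℝ) * σ ≤ 1 := by
        have : ((n + 1 : ℕ) : ℝ) ≤ K := by exact_mod_cast hlt.le
        nlinarith
      calc C * (p : ℝ) ^ (((n + 1 : ℕ) : ℝ) * E)
          ≤ C * (p : ℝ) ^ (1 + ((n + 1 : ℕ) : ℝ) * (E - σ)) := by
            refine mul_le_mul_of_nonneg_left
              (Real.rpow_le_rpow_of_exponent_le hP.le (by nlinarith)) hC.le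
        _ = C * p * (p : ℝ) ^ (((n + 1 : ℕ) : ℝ) * (E - σ)) := by
            rw [Real.rpow_add hP0, Real.rpow_one]; ring
        _ ≤ _ := by gcongr; exact le_max_left _ _
    · have hb : 1 ≤ (n + 1) / K := (Nat.one_le_div_iff (by omega)).2 hge
      refine (hrec (n + 1) ((n + 1) / K) hb (by omega) (Nat.mul_div_le _ _)).trans ?_
      rw [Nat.add_sub_cancel]
      set y := ((n + 1 : ℕ) : ℝ) * (E - σ) with hy
      have h1 : (p : ℝ) ^ (((n + 1 : ℕ) : ℝ) * E - ((n + 1) / K : ℕ)) ≤ p * (p : ℝ) ^ y := by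
        nth_rw 2 [← Real.rpow_one (p : ℝ)]
        rw [← Real.rpow_add hP0]
        refine Real.rpow_le_rpow_of_exponent_le hP.le ?_
        have h2 : n + 1 < K * ((n + 1) / K + 1) := Nat.lt_mul_div_succ _ (by omega)
        have h3 : ((n + 1 : ℕ) : ℝ) ≤ K * (((n + 1) / K : ℕ) + 1) := by exact_mod_cast h2.le
        have h4 : ((n + 1 : ℕ) : ℝ) * σ ≤ ((n + 1) / K : ℕ) + 1 := by
          have := mul_le_mul_of_nonneg_right h3 hσ0.le
          have h5 : (K : ℝ) * (((n + 1) / K : ℕ) + 1) * σ = (((n + 1) / K : ℕ) + 1) * (σ * K) := by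
            ring
          rw [h5, hσK, mul_one] at this
          exact this
        rw [hy]
        linarith
      have h2 : (p : ℝ) ^ ((n : ℝ) * (E - σ)) ≤ (p : ℝ) ^ y / (p : ℝ) ^ 2 := by
        have : (p : ℝ) ^ y / (p : ℝ) ^ 2 = (p : ℝ) ^ (y - 2) := by
          rw [Real.rpow_sub hP0]; norm_num
        rw [this]
        refine Real.rpow_le_rpow_of_exponent_le hP.le ?_
        rw [hy]
        push_cast
        nlinarith
      have h3 : 2 * ((R + 1 : ℕ) : ℝ) ^ (2 * (R * (q + 1))) / p ≤ 1 := by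
        rw [div_le_one hP0]; exact_mod_cast hpR
      have h4 : ((R + 1 : ℕ) : ℝ) ^ (2 * (R * (q + 1))) *
          (p * vinogradovCount p (R + q) (R * (q + 1)) n) ≤ A / 2 * (p : ℝ) ^ y := by
        calc _ ≤ ((R + 1 : ℕ) : ℝ) ^ (2 * (R * (q + 1))) *
              (p * (A * ((p : ℝ) ^ y / (p : ℝ) ^ 2))) := by
              gcongr
              exact ih.trans (mul_le_mul_of_nonneg_left h2 hA0.le)
          _ = (2 * ((R + 1 : ℕ) : ℝ) ^ (2 * (R * (q + 1))) / p) * (A / 2 * (p : ℝ) ^ y) := by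
              field_simp
          _ ≤ _ := mul_le_of_le_one_left (by positivity) h3
      have h5 : D * (p * (p : ℝ) ^ y) ≤ A / 2 * (p : ℝ) ^ y := by
        rw [← mul_assoc]
        refine mul_le_mul_of_nonneg_right ?_ (by positivity)
        have := le_max_right (C * p) (2 * (D * p))
        linarith
      have h6 := mul_le_mul_of_nonneg_left h1 hD.le
      linarith

end Model

section Descent

variable {p R q : ℕ}

lemma CountBound.mono (hp : 1 ≤ p) {E E' : ℝ} (hE : E ≤ E') (h : CountBound p R q E) :
    CountBound p R q E' := by
  obtain ⟨C, hC, h⟩ := h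
  refine ⟨C, hC, fun m => (h m).trans ?_⟩
  have hP : (1 : ℝ) ≤ p := by exact_mod_cast hp
  gcongr

lemma countBound_trivial (p R q : ℕ) :
    CountBound p R q ((2 * (R * (q + 1)) : ℕ) : ℝ) := by
  refine ⟨1, one_pos, fun m => ?_⟩
  rw [one_mul, ← Nat.cast_mul, Real.rpow_natCast]
  have : vinogradovCount p (R + q) (R * (q + 1)) m ≤ p ^ (m * (2 * (R * (q + 1)))) := by
    refine (card_le_card (t := (Fintype.piFinset fun _ => range (p ^ m)) ×ˢ
      Fintype.piFinset fun _ => range (p ^ m)) fun z hz => ?_).trans_eq ?_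
    · rw [mem_equalPowerSums] at hz
      exact mem_product.2 ⟨Fintype.mem_piFinset.2 hz.1, Fintype.mem_piFinset.2 hz.2.1⟩
    simp only [card_product, Fintype.card_piFinset, card_range, prod_const, card_univ,
      Fintype.card_fin]
    ring
  exact_mod_cast this

lemma countBound_of_pos [Fact p.Prime] (hp : R + q < p)
    (hpR : 2 * (R + 1) ^ (2 * (R * (q + 1))) ≤ p)
    (hR2 : 2 ≤ R) (hR : R ≤ q + 1) (hq : 2 ≤ q) {Λ : ℝ} (hΛ : 0 < Λ) :
    CountBound p R q (R * (q + 1) + Λ) := by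
  have hp1 : 1 ≤ p := (Fact.out : p.Prime).one_lt.le
  obtain ⟨σ, hσ, hsub⟩ := exists_countBound_sub hp hpR hR2 hR hq hΛ
  set t : ℝ := ((2 * (R * (q + 1)) : ℕ) : ℝ) with ht
  have key : ∀ n : ℕ, CountBound p R q (max (R * (q + 1) + Λ) (t - n * σ)) := by
    intro n
    induction n with
    | zero => exact (countBound_trivial p R q).mono hp1 (by simp [ht])
    | succ n ih =>
      refine (hsub _ (le_max_left _ _) ih).mono hp1 ?_
      rw [sub_le_iff_le_add, max_add]
      refine max_le_max (by linarith) (by push_cast; linarith)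
  obtain ⟨n, hn⟩ := exists_nat_ge (t / σ)
  refine (key n).mono hp1 (max_le le_rfl ?_)
  rw [div_le_iff₀ hσ] at hn
  have : (0 : ℝ) ≤ R * (q + 1) := by positivity
  linarith

end Descent

lemma vinogradovCount_mul_pow_le (p k s t m : ℕ) :
    vinogradovCount p k s m * (p ^ m) ^ t ≤ vinogradovCount p k (s + t) m := by
  have h1 : (Fintype.piFinset fun _ : Fin t => range (p ^ m)).card = (p ^ m) ^ t := by simp
  rw [vinogradovCount, ← h1, ← card_product]
  refine card_le_card_of_injOn
    (fun w => (Fin.append w.1.1 w.2, Fin.append w.1.2 w.2)) ?_ ?_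
  · rintro ⟨⟨x, y⟩, z⟩ hw
    rw [mem_coe, mem_product, mem_equalPowerSums, Fintype.mem_piFinset] at hw
    obtain ⟨⟨hx, hy, hxy⟩, hz⟩ := hw
    rw [mem_coe, mem_equalPowerSums]
    refine ⟨fun i => ?_, fun i => ?_, fun j hj => ?_⟩
    · refine Fin.addCases (fun i => ?_) (fun i => ?_) i
      · simpa using hx i
      · simpa using hz i
    · refine Fin.addCases (fun i => ?_) (fun i => ?_) i
      · simpa using hy i
      · simpa using hz i
    · simpa [Fin.sum_univ_add] using hxy j hj
  · rintro ⟨⟨x, y⟩, z⟩ - ⟨⟨x', y'⟩, z'⟩ - h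
    simp only [Prod.mk.injEq] at h ⊢
    refine ⟨⟨funext fun i => ?_, funext fun i => ?_⟩, funext fun i => ?_⟩
    · simpa using congrFun h.1 (Fin.castAdd t i)
    · simpa using congrFun h.2 (Fin.castAdd t i)
    · simpa using congrFun h.1 (Fin.natAdd s i)

lemma Jcount_le_vinogradovCount {p k s m : ℕ} {X : ℝ} (hX : X < (p : ℝ) ^ m) :
    Jcount s k X ≤ vinogradovCount p k s m := by
  rw [Jcount, vinogradovCount, ← Set.ncard_coe_finset]
  refine Set.ncard_le_ncard_of_injOn
    (fun z => (fun i => (z.1 i).toNat, fun i => (z.2 i).toNat)) ?_ ?_ (finite_toSet _)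
  · rintro ⟨x, y⟩ ⟨hx, hy, hxy⟩
    have hlt : ∀ a : ℤ, 1 ≤ a ∧ (a : ℝ) ≤ X → a.toNat ∈ range (p ^ m) := by
      rintro a ⟨ha1, ha⟩
      have h1 : a < (p : ℤ) ^ m := by exact_mod_cast ha.trans_lt hX
      rw [mem_range]
      zify
      rwa [Int.toNat_of_nonneg (by omega)]
    rw [mem_coe, mem_equalPowerSums]
    refine ⟨fun i => hlt _ (hx i), fun i => hlt _ (hy i), fun j hj => ?_⟩
    have h1 := hxy j hj
    rw [sum_sub_distrib, sub_eq_zero] at h1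
    zify
    have hx' : ∀ i, ((x i).toNat : ℤ) = x i := fun i =>
      Int.toNat_of_nonneg (zero_le_one.trans (hx i).1)
    have hy' : ∀ i, ((y i).toNat : ℤ) = y i := fun i =>
      Int.toNat_of_nonneg (zero_le_one.trans (hy i).1)
    simpa only [hx', hy'] using h1
  · rintro ⟨x, y⟩ ⟨hx, hy, -⟩ ⟨x', y'⟩ ⟨hx', hy', -⟩ h
    simp only [Prod.mk.injEq] at h hx hy hx' hy' ⊢
    refine ⟨funext fun i => ?_, funext fun i => ?_⟩
    · have h1 : (x i).toNat = (x' i).toNat := congrFun h.1 i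
      have := (hx i).1
      have := (hx' i).1
      omega
    · have h1 : (y i).toNat = (y' i).toNat := congrFun h.2 i
      have := (hy i).1
      have := (hy' i).1
      omega

/-- Theorem 1.1: for k at least 4 and 1 ≤ s ≤ (k+1)²/4, one has
J_{s,k}(X) ≤ C(s,k,ε) X^{s+ε} for all X ≥ 1. -/
theorem main_conjecture_diagonal_range (k s : ℕ) (hk : 4 ≤ k) (hs1 : 1 ≤ s)
    (hs2 : (s : ℝ) ≤ ((k : ℝ) + 1) ^ 2 / 4) (ε : ℝ) (hε : 0 < ε) :
    ∃ C : ℝ, 0 < C ∧ ∀ X : ℝ, 1 ≤ X →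
      (Jcount s k X : ℝ) ≤ C * X ^ ((s : ℝ) + ε) := by
  obtain ⟨R, q, rfl, hR, hq, hsR⟩ : ∃ R q, k = R + q ∧ R ≤ q + 1 ∧ q ≤ R ∧ s ≤ R * (q + 1) := by
    have h4 : 4 * s ≤ (k + 1) ^ 2 := by
      have : (4 : ℝ) * s ≤ ((k : ℝ) + 1) ^ 2 := by linarith
      exact_mod_cast this
    rcases Nat.even_or_odd' k with ⟨n, rfl | rfl⟩
    · exact ⟨n, n, by ring, by omega, le_rfl, by nlinarith⟩
    · exact ⟨n + 1, n, by ring, le_rfl, by omega, by nlinarith⟩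
  obtain ⟨t, ht⟩ := Nat.exists_eq_add_of_le hsR
  obtain ⟨p, hpge, hp⟩ := Nat.exists_infinite_primes
    (R + q + 1 + 2 * (R + 1) ^ (2 * (R * (q + 1))))
  have : Fact p.Prime := ⟨hp⟩
  obtain ⟨C, hC, hJ⟩ := countBound_of_pos (p := p) (R := R) (q := q) (by omega) (by omega)
    (by omega) hR (by omega) hε
  have hP : (1 : ℝ) < p := by exact_mod_cast hp.one_lt
  have hP0 : (0 : ℝ) < p := by linarith
  refine ⟨C * (p : ℝ) ^ ((s : ℝ) + ε), by positivity, fun X hX => ?_⟩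
  obtain ⟨n, hn, hn'⟩ := exists_nat_pow_near hX hP
  have h1 : (Jcount s (R + q) X : ℝ) ≤ vinogradovCount p (R + q) s (n + 1) := by
    exact_mod_cast Jcount_le_vinogradovCount hn'
  have h2 : (vinogradovCount p (R + q) s (n + 1) : ℝ) * ((p : ℝ) ^ (n + 1)) ^ t ≤
      vinogradovCount p (R + q) (R * (q + 1)) (n + 1) := by
    rw [ht]
    exact_mod_cast vinogradovCount_mul_pow_le p (R + q) s t (n + 1)
  have h3 : (R : ℝ) * (q + 1) = s + t := by exact_mod_cast ht
  have h4 : C * (p : ℝ) ^ (((n + 1 : ℕ) : ℝ) * (R * (q + 1) + ε)) =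
      C * (p : ℝ) ^ ((s : ℝ) + ε) * ((p : ℝ) ^ n) ^ ((s : ℝ) + ε) * ((p : ℝ) ^ (n + 1)) ^ t := by
    rw [← Real.rpow_natCast_mul hP0.le, ← pow_mul, ← Real.rpow_natCast, mul_assoc, mul_assoc,
      ← Real.rpow_add hP0, ← Real.rpow_add hP0, h3]
    congr 2
    push_cast
    ring
  have h5 : (vinogradovCount p (R + q) s (n + 1) : ℝ) ≤
      C * (p : ℝ) ^ ((s : ℝ) + ε) * ((p : ℝ) ^ n) ^ ((s : ℝ) + ε) := by
    refine le_of_mul_le_mul_right (h2.trans ((hJ (n + 1)).trans_eq h4)) (by positivity)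
  refine h1.trans (h5.trans ?_)
  gcongr
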